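/- arXiv:2010.12003 — 5 statements merged into one kernel-verified Lean document; each statement's English description precedes it below -/
import Mathlib

section
/- Let (X, ϱ, μ) be an Ahlfors regular space of dimension d equipped with a dyadic decomposition of parameters δ and K, let F ⊆ X be any subset and let 0 < s ≤ d. Then the following four statements are equivalent: (i) D^s_∞(F ∩ Q) = D^s_∞(Q) for every dyadic cube Q; (ii) D^s_∞(F ∩ U) = D^s_∞(U) for every open set U ⊆ X; (iii) there exists a constant 0 < c ≤ 1 such that D^s_∞(F ∩ U) ≥ c·D^s_∞(U) for every open set U ⊆ X; (iv) there exists a constant 0 < c ≤ 1 such that D^s_∞(F ∩ Q) ≥ c·D^s_∞(Q) for every dyadic cube Q. -/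
/-!
The four conditions are called (i) to (iv), in the order in which the theorem lists them. Write
`h(A) = μ(A)^(s/d)`. The exponent `s/d` lies in `(0, 1]`, so `t ↦ t^(s/d)` is countably
subadditive; hence `μ(E)^(s/d) ≤ D^s_∞(E)` for every set `E` (`measure_rpow_le_netContent`), and in
particular `D^s_∞(Q) = h(Q)` for a cube `Q`.

* (i) ⇒ (ii). Let `S` cover `F ∩ U`. Every cube `Q` which is maximal among the cubes inside `U` and
  is not contained in a member of `S` satisfies `h(Q) ≤ ∑_{A ∈ S, A ⊆ Q} h(A)`, since the members
  of `S` meeting `Q` lie in `Q` and cover `F ∩ Q`. Replacing the members of `S` inside such cubes by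
  the cubes themselves gives a cover of `U` which is not more expensive than `S`.
* (ii) ⇒ (iii) is trivial.
* (iii) ⇒ (iv). By Ahlfors regularity each cube `Q` contains an open set `U` with `μ(U) ≥ c' μ(Q)`:
  the union of the inner balls of the subcubes of `Q` at a fixed relative depth `m`. The depth
  makes the outer balls of the subcubes smaller than the diameter of `X`, the range in which
  regularity gives information. Then `D^s_∞(F ∩ Q) ≥ c D^s_∞(U) ≥ c μ(U)^(s/d)`.
* (iv) ⇒ (i). Let `S` cover `F ∩ Q` with finite cost and let `t ⊆ S` be finite. Fix `N` at least the
  generations of `Q` and of the members of `t`. The set `P = Q \ ⋃₀ S` is covered by the cubes `R` of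
  generation `N` meeting it. Such an `R` lies in `Q` and in no member of `S`, and is disjoint from
  the members of `t`, so `c h(R)` is at most the cost of the members of `S` outside `t` that lie
  inside `R`. Summing over `R` and using subadditivity, `c μ(P)^(s/d)` is at most the cost of the
  members of `S` outside `t`, which tends to `0` as `t` grows. So `S` covers almost all of `Q`, and
  subadditivity gives `h(Q) ≤ ∑_{A ∈ S} h(A)`.

Neither `X` nor the index sets are assumed separable or countable. Countability of the families
constructed above follows from the finiteness of the sums, since cubes have positive measure when
`X` has at least two points. Regularity says nothing about a one-point space, but there are only
finitely many sets in it.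
-/

open MeasureTheory Metric Set ENNReal Filter

noncomputable section

/-- `(X, ϱ, μ)` is Ahlfors regular of dimension `d` with constant `C`:
`C⁻¹ r^d ≤ μ(B(x,r)) ≤ C r^d` for all `x` and `0 < r ≤ diam X`. -/
def AhlforsRegular {X : Type*} [MetricSpace X] [MeasurableSpace X]
    (μ : Measure X) (d C : ℝ) : Prop :=
  1 ≤ C ∧ ∀ (x : X) (r : ℝ), 0 < r → ENNReal.ofReal r ≤ EMetric.diam (Set.univ : Set X) →
    ENNReal.ofReal (C⁻¹ * r ^ d) ≤ μ (Metric.ball x r) ∧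
      μ (Metric.ball x r) ≤ ENNReal.ofReal (C * r ^ d)

/-- A dyadic decomposition of parameters `δ` and `K` on a metric measure space. -/
structure DyadicDecomp (X : Type*) [MetricSpace X] [MeasurableSpace X] (δ K : ℝ) where
  ι : ℕ → Type
  Q : ∀ j : ℕ, ι j → Set X
  measurableSet : ∀ j k, MeasurableSet (Q j k)
  cover : ∀ j : ℕ, (⋃ k, Q j k) = Set.univ
  quasiball : ∀ j k, ∃ x ∈ Q j k,
    Metric.ball x (δ ^ j) ⊆ Q j k ∧ Q j k ⊆ Metric.ball x (K * δ ^ j)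
  nested : ∀ (i j : ℕ) (k' : ι i) (k : ι j), j ≤ i →
    Q i k' ⊆ Q j k ∨ Disjoint (Q i k') (Q j k)

/-- `A` is a dyadic cube of the decomposition `𝒟`. -/
def DyadicDecomp.IsCube {X : Type*} [MetricSpace X] [MeasurableSpace X] {δ K : ℝ}
    (𝒟 : DyadicDecomp X δ K) (A : Set X) : Prop :=
  ∃ j k, A = 𝒟.Q j k

/-- The net content `D^s_∞(E)`: infimum of `Σ μ(Qₙ)^(s/d)` over countable covers of `E`
by dyadic cubes. -/
def netContent {X : Type*} [MetricSpace X] [MeasurableSpace X] {δ K : ℝ}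
    (𝒟 : DyadicDecomp X δ K) (μ : Measure X) (d s : ℝ) (E : Set X) : ℝ≥0∞ :=
  ⨅ (S : Set (Set X)) (_ : S.Countable) (_ : ∀ A ∈ S, 𝒟.IsCube A) (_ : E ⊆ ⋃₀ S),
    ∑' A : S, μ (A : Set X) ^ (s / d)

/-! ### Sums and subadditivity -/

/-- Countable subadditivity of `t ↦ t ^ a` for `0 < a ≤ 1`. -/
lemma ennreal_tsum_rpow_le {ι : Type*} (f : ι → ℝ≥0∞) {a : ℝ} (ha : 0 < a) (ha1 : a ≤ 1) :
    (∑' i, f i) ^ a ≤ ∑' i, f i ^ a := by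
  have hfin : ∀ t : Finset ι, (∑ i ∈ t, f i) ^ a ≤ ∑ i ∈ t, f i ^ a := by
    intro t
    classical
    induction t using Finset.induction_on with
    | empty => simp [ENNReal.zero_rpow_of_pos ha]
    | insert i t hi ih =>
      rw [Finset.sum_insert hi, Finset.sum_insert hi]
      exact (ENNReal.rpow_add_le_add_rpow _ _ ha.le ha1).trans (by gcongr)
  have h1 : Tendsto (fun t : Finset ι => (∑ i ∈ t, f i) ^ a) atTop (nhds ((∑' i, f i) ^ a)) :=
    (ENNReal.continuous_rpow_const.tendsto _).comp ENNReal.summable.hasSum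
  exact le_of_tendsto' h1 fun t => (hfin t).trans (ENNReal.sum_le_tsum t)

/-- If the cost `g` of each member of a disjoint family `G` is paid for by the members of `S` inside
it, then the total cost of `G` is at most that of `S`. -/
lemma tsum_le_tsum_of_pairwiseDisjoint {X : Type*} {G S : Set (Set X)} {g h : Set X → ℝ≥0∞}
    (hG : ∀ A ∈ G, ∀ B ∈ G, (A ∩ B).Nonempty → A = B) (hS : ∀ A ∈ S, A.Nonempty)
    (hle : ∀ Q ∈ G, g Q ≤ ∑' A : {A | A ∈ S ∧ A ⊆ Q}, h A) :
    ∑' Q : G, g Q ≤ ∑' A : S, h A := by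
  have hdis : G.PairwiseDisjoint fun Q => {A | A ∈ S ∧ A ⊆ Q} := by
    intro A hA B hB hAB
    refine Set.disjoint_left.2 fun Z hZ hZ' => hAB ?_
    exact hG A hA B hB ((hS Z hZ.1).mono (subset_inter hZ.2 hZ'.2))
  calc ∑' Q : G, g Q ≤ ∑' Q : G, ∑' A : {A | A ∈ S ∧ A ⊆ (Q : Set X)}, h A :=
        ENNReal.tsum_le_tsum fun Q => hle Q Q.2
    _ = ∑' A : (⋃ Q ∈ G, {A | A ∈ S ∧ A ⊆ Q} : Set (Set X)), h A :=
        (ENNReal.tsum_biUnion' hdis).symm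
    _ ≤ ∑' A : S, h A := by
        apply ENNReal.tsum_mono_subtype
        intro A hA
        simp only [mem_iUnion] at hA
        obtain ⟨_, _, hA⟩ := hA
        exact hA.1

lemma measure_sUnion_rpow_le {X : Type*} [MeasurableSpace X] {μ : Measure X} {d s : ℝ}
    {S : Set (Set X)} (hS : S.Countable) (hd : 0 < d) (hs : 0 < s) (hsd : s ≤ d) :
    μ (⋃₀ S) ^ (s / d) ≤ ∑' A : S, μ (A : Set X) ^ (s / d) := by
  have h1 : μ (⋃₀ S) ≤ ∑' A : S, μ (A : Set X) := by
    rw [sUnion_eq_biUnion]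
    exact measure_biUnion_le μ hS fun A => A
  exact (ENNReal.rpow_le_rpow h1 (by positivity)).trans
    (ennreal_tsum_rpow_le _ (by positivity) ((div_le_one hd).2 hsd))

lemma exists_pos_le_diam {X : Type*} [MetricSpace X] [Nontrivial X] :
    ∃ r : ℝ, 0 < r ∧ ENNReal.ofReal r ≤ Metric.ediam (Set.univ : Set X) := by
  obtain ⟨a, b, hab⟩ := exists_pair_ne X
  refine ⟨dist a b, dist_pos.2 hab, ?_⟩
  rw [← edist_dist]
  exact Metric.edist_le_ediam_of_mem (mem_univ a) (mem_univ b)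

/-! ### Net content and cubes -/

section

variable {X : Type*} [MetricSpace X] [MeasurableSpace X] {δ K : ℝ} {𝒟 : DyadicDecomp X δ K}
  {μ : Measure X} {d C s : ℝ}

lemma le_netContent {E : Set X} {m : ℝ≥0∞}
    (h : ∀ S : Set (Set X), S.Countable → (∀ A ∈ S, 𝒟.IsCube A) → E ⊆ ⋃₀ S →
      ∑' A : S, μ (A : Set X) ^ (s / d) ≠ ∞ → m ≤ ∑' A : S, μ (A : Set X) ^ (s / d)) :
    m ≤ netContent 𝒟 μ d s E := by
  refine le_iInf fun S => le_iInf fun h1 => le_iInf fun h2 => le_iInf fun h3 => ?_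
  by_cases h4 : ∑' A : S, μ (A : Set X) ^ (s / d) = ∞
  · rw [h4]; exact le_top
  · exact h S h1 h2 h3 h4

lemma netContent_le {E : Set X} {S : Set (Set X)} (h1 : S.Countable) (h2 : ∀ A ∈ S, 𝒟.IsCube A)
    (h3 : E ⊆ ⋃₀ S) : netContent 𝒟 μ d s E ≤ ∑' A : S, μ (A : Set X) ^ (s / d) :=
  iInf_le_of_le S (iInf_le_of_le h1 (iInf_le_of_le h2 (iInf_le_of_le h3 le_rfl)))

lemma netContent_mono {E E' : Set X} (h : E ⊆ E') :
    netContent 𝒟 μ d s E ≤ netContent 𝒟 μ d s E' :=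
  le_netContent fun _ h1 h2 h3 _ => netContent_le h1 h2 (h.trans h3)

lemma measure_rpow_le_netContent (hd : 0 < d) (hs : 0 < s) (hsd : s ≤ d) (E : Set X) :
    μ E ^ (s / d) ≤ netContent 𝒟 μ d s E :=
  le_netContent fun _ h1 _ h3 _ =>
    (ENNReal.rpow_le_rpow (measure_mono h3) (by positivity)).trans
      (measure_sUnion_rpow_le h1 hd hs hsd)

lemma netContent_cube_le {Q : Set X} (hQ : 𝒟.IsCube Q) :
    netContent 𝒟 μ d s Q ≤ μ Q ^ (s / d) := by
  refine (netContent_le (S := {Q}) (countable_singleton Q) (by simpa using hQ) (by simp)).trans ?_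
  rw [tsum_singleton Q fun A => μ A ^ (s / d)]

lemma DyadicDecomp.IsCube.nonempty {A : Set X} (hA : 𝒟.IsCube A) : A.Nonempty := by
  obtain ⟨j, k, rfl⟩ := hA
  obtain ⟨x, hx, _⟩ := 𝒟.quasiball j k
  exact ⟨x, hx⟩

lemma DyadicDecomp.subset_of_inter_nonempty {i j : ℕ} {k' : 𝒟.ι i} {k : 𝒟.ι j} (hij : j ≤ i)
    (h : (𝒟.Q i k' ∩ 𝒟.Q j k).Nonempty) : 𝒟.Q i k' ⊆ 𝒟.Q j k :=
  (𝒟.nested i j k' k hij).resolve_right (Set.not_disjoint_iff_nonempty_inter.2 h)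

lemma DyadicDecomp.IsCube.subset_or_subset {A B : Set X} (hA : 𝒟.IsCube A) (hB : 𝒟.IsCube B)
    (h : (A ∩ B).Nonempty) : A ⊆ B ∨ B ⊆ A := by
  obtain ⟨i, k', rfl⟩ := hA
  obtain ⟨j, k, rfl⟩ := hB
  rcases le_total j i with hij | hij
  · exact Or.inl (DyadicDecomp.subset_of_inter_nonempty hij h)
  · exact Or.inr (DyadicDecomp.subset_of_inter_nonempty hij (inter_comm _ _ ▸ h))

lemma DyadicDecomp.exists_mem (𝒟 : DyadicDecomp X δ K) (j : ℕ) (x : X) : ∃ k, x ∈ 𝒟.Q j k := by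
  have := 𝒟.cover j ▸ mem_univ x
  simpa using this

/-- Every point of an open set lies in a cube contained in the open set. -/
lemma DyadicDecomp.exists_subset_open (𝒟 : DyadicDecomp X δ K) (hδ0 : 0 < δ) (hδ1 : δ < 1)
    (hK : 1 ≤ K) {U : Set X} (hU : IsOpen U) {x : X} (hx : x ∈ U) :
    ∃ j k, x ∈ 𝒟.Q j k ∧ 𝒟.Q j k ⊆ U := by
  obtain ⟨ε, hε, hεU⟩ := Metric.isOpen_iff.1 hU x hx
  have hK0 : 0 < K := by linarith
  obtain ⟨j, hj⟩ := exists_pow_lt_of_lt_one (show 0 < ε / (2 * K) by positivity) hδ1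
  rw [lt_div_iff₀ (by positivity)] at hj
  obtain ⟨k, hk⟩ := 𝒟.exists_mem j x
  refine ⟨j, k, hk, fun y hy => hεU ?_⟩
  obtain ⟨z, _, _, hz⟩ := 𝒟.quasiball j k
  have h1 := mem_ball.1 (hz hk)
  have h2 := mem_ball.1 (hz hy)
  have h3 := dist_triangle_right y x z
  rw [mem_ball]
  linarith

/-- Every point of an open set `U` lies in a cube which is maximal among the cubes inside `U`. -/
lemma DyadicDecomp.exists_maximal (𝒟 : DyadicDecomp X δ K) (hδ0 : 0 < δ) (hδ1 : δ < 1)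
    (hK : 1 ≤ K) {U : Set X} (hU : IsOpen U) {x : X} (hx : x ∈ U) :
    ∃ Q, x ∈ Q ∧ Maximal (fun A => 𝒟.IsCube A ∧ A ⊆ U) Q := by
  classical
  have h := 𝒟.exists_subset_open hδ0 hδ1 hK hU hx
  obtain ⟨k, hk, hkU⟩ := Nat.find_spec h
  refine ⟨_, hk, ⟨⟨_, k, rfl⟩, hkU⟩, ?_⟩
  rintro B ⟨⟨i, k', rfl⟩, hB⟩ hle
  have hi : Nat.find h ≤ i := Nat.find_min' h ⟨k', hle hk, hB⟩
  exact DyadicDecomp.subset_of_inter_nonempty hi ⟨x, hle hk, hk⟩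

/-! ### Positivity of the measure and countability -/

lemma measure_cube_ne_zero [Nontrivial X] (hreg : AhlforsRegular μ d C) (hδ0 : 0 < δ)
    {Q : Set X} (hQ : 𝒟.IsCube Q) : μ Q ≠ 0 := by
  obtain ⟨j, k, rfl⟩ := hQ
  obtain ⟨x, _, hx, _⟩ := 𝒟.quasiball j k
  obtain ⟨r, hr, hrd⟩ := exists_pos_le_diam (X := X)
  obtain ⟨hC, hreg⟩ := hreg
  have hr' : 0 < min r (δ ^ j) := by positivity
  have h1 := (hreg x _ hr' ((ENNReal.ofReal_le_ofReal (min_le_left _ _)).trans hrd)).1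
  have h2 : 0 < ENNReal.ofReal (C⁻¹ * min r (δ ^ j) ^ d) :=
    ENNReal.ofReal_pos.2 (by have : 0 < C := by linarith
                             positivity)
  exact (h2.trans_le (h1.trans
    (measure_mono ((ball_subset_ball (min_le_right _ _)).trans hx)))).ne'

/-- A family of cubes of finite cost is countable. -/
lemma countable_of_tsum_ne_top (hreg : AhlforsRegular μ d C) (hδ0 : 0 < δ) (hd : 0 < d)
    (hs : 0 < s) {G : Set (Set X)} (hG : ∀ A ∈ G, 𝒟.IsCube A)
    (hsum : ∑' A : G, μ (A : Set X) ^ (s / d) ≠ ∞) : G.Countable := by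
  rcases subsingleton_or_nontrivial X with hX | hX
  · exact G.toFinite.countable
  · have h1 := Summable.countable_support_ennreal hsum
    have h2 : Function.support (fun A : G => μ (A : Set X) ^ (s / d)) = univ := by
      refine eq_univ_of_forall fun A => ?_
      have := measure_cube_ne_zero hreg hδ0 (hG A A.2)
      rw [Function.mem_support, Ne, ENNReal.rpow_eq_zero_iff_of_pos (by positivity)]
      exact this
    rw [h2] at h1
    exact countable_coe_iff.1 (countable_univ_iff.1 h1)

/-! ### From cubes to open sets -/

/-- The implication (i) ⇒ (ii). -/
lemma netContent_open_le (hreg : AhlforsRegular μ d C) (hδ0 : 0 < δ) (hδ1 : δ < 1) (hK : 1 ≤ K)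
    (hd : 0 < d) (hs : 0 < s) (hsd : s ≤ d) {F : Set X}
    (h : ∀ Q, 𝒟.IsCube Q → netContent 𝒟 μ d s (F ∩ Q) = netContent 𝒟 μ d s Q)
    {U : Set X} (hU : IsOpen U) : netContent 𝒟 μ d s U ≤ netContent 𝒟 μ d s (F ∩ U) := by
  refine le_netContent fun S hSc hS hFS hfin => ?_
  -- the maximal cubes of `U` not contained in a member of `S`
  set M : Set (Set X) :=
    {Q | Maximal (fun A => 𝒟.IsCube A ∧ A ⊆ U) Q ∧ ∀ A ∈ S, ¬ Q ⊆ A} with hM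
  -- the members of `S` to be kept
  set S' : Set (Set X) := {A | A ∈ S ∧ ∀ Q ∈ M, ¬ A ⊆ Q} with hS'
  have hMcube : ∀ Q ∈ M, 𝒟.IsCube Q := fun Q hQ => hQ.1.prop.1
  have hMS : ∑' Q : M, μ (Q : Set X) ^ (s / d) ≤ ∑' A : (S \ S' : Set (Set X)),
      μ (A : Set X) ^ (s / d) := by
    refine tsum_le_tsum_of_pairwiseDisjoint (g := fun A => μ A ^ (s / d))
      (h := fun A => μ A ^ (s / d)) ?_ (fun A hA => (hS A hA.1).nonempty) ?_
    · intro A hA B hB hAB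
      rcases (hMcube A hA).subset_or_subset (hMcube B hB) hAB with h1 | h1
      · exact h1.antisymm (hA.1.le_of_ge hB.1.prop h1)
      · exact (hB.1.le_of_ge hA.1.prop h1).antisymm h1
    · intro Q hQ
      refine (measure_rpow_le_netContent (𝒟 := 𝒟) hd hs hsd Q).trans ?_
      rw [← h Q (hMcube Q hQ)]
      refine netContent_le (hSc.mono fun A hA => hA.1.1) (fun A hA => hS A hA.1.1) ?_
      rintro x ⟨hxF, hxQ⟩
      obtain ⟨A, hA, hxA⟩ := hFS ⟨hxF, hQ.1.prop.2 hxQ⟩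
      have hAQ : A ⊆ Q :=
        ((hS A hA).subset_or_subset (hMcube Q hQ) ⟨x, hxA, hxQ⟩).resolve_right (hQ.2 A hA)
      exact ⟨A, ⟨⟨hA, fun hA' => hA'.2 Q hQ hAQ⟩, hAQ⟩, hxA⟩
  have hsplit : ∑' A : (S \ S' : Set (Set X)), μ (A : Set X) ^ (s / d)
      + ∑' A : S', μ (A : Set X) ^ (s / d) = ∑' A : S, μ (A : Set X) ^ (s / d) := by
    have hun : S \ S' ∪ S' = S := Set.sdiff_union_of_subset fun A hA => hA.1
    rw [← ENNReal.summable.tsum_union_disjoint (f := fun A : Set X => μ A ^ (s / d))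
      Set.disjoint_sdiff_left ENNReal.summable, hun]
  have hle : ∑' A : (M ∪ S' : Set (Set X)), μ (A : Set X) ^ (s / d)
      ≤ ∑' A : S, μ (A : Set X) ^ (s / d) := by
    rw [← hsplit]
    exact (ENNReal.tsum_union_le (fun A : Set X => μ A ^ (s / d)) M S').trans (by gcongr)
  have hcube : ∀ A ∈ M ∪ S', 𝒟.IsCube A := by
    rintro A (hA | hA)
    · exact hMcube A hA
    · exact hS A hA.1
  refine (netContent_le (countable_of_tsum_ne_top hreg hδ0 hd hs hcube
    (ne_top_of_le_ne_top hfin hle)) hcube ?_).trans hle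
  intro x hx
  obtain ⟨Q, hxQ, hQ⟩ := 𝒟.exists_maximal hδ0 hδ1 hK hU hx
  by_cases hQM : Q ∈ M
  · exact ⟨Q, Or.inl hQM, hxQ⟩
  · obtain ⟨A, hA, hQA⟩ : ∃ A ∈ S, Q ⊆ A := by
      by_contra! hcon
      exact hQM ⟨hQ, hcon⟩
    by_cases hA' : A ∈ S'
    · exact ⟨A, Or.inr hA', hQA hxQ⟩
    · obtain ⟨R, hR, hAR⟩ : ∃ R ∈ M, A ⊆ R := by
        by_contra! hcon
        exact hA' ⟨hA, hcon⟩
      exact ⟨R, Or.inl hR, hAR (hQA hxQ)⟩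

/-! ### From open sets to cubes -/

/-- Each cube contains an open set carrying a fixed proportion of its measure: the union of the
inner balls of its subcubes at a suitable relative depth. The inner ball of the cube itself need not
do: if `X` is bounded, a cube of an early generation can have infinite measure while its inner ball
has finite measure. -/
lemma exists_open_subset_cube [BorelSpace X] [Nontrivial X] (hreg : AhlforsRegular μ d C)
    (hδ0 : 0 < δ) (hδ1 : δ < 1) (hK : 1 ≤ K) (hd : 0 < d) :
    ∃ c : ℝ≥0∞, 0 < c ∧ c ≤ 1 ∧ ∀ Q, 𝒟.IsCube Q →
      ∃ U, IsOpen U ∧ U ⊆ Q ∧ c * μ Q ≤ μ U := by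
  obtain ⟨D, hD, hDd⟩ := exists_pos_le_diam (X := X)
  obtain ⟨hC, hreg⟩ := hreg
  have hC0 : 0 < C := by linarith
  have hK0 : 0 < K := by linarith
  obtain ⟨m, hm⟩ := exists_pow_lt_of_lt_one (show 0 < D / K by positivity) hδ1
  rw [lt_div_iff₀ hK0] at hm
  have hKd : 1 ≤ K ^ d := Real.one_le_rpow hK hd.le
  refine ⟨ENNReal.ofReal (C⁻¹ * C⁻¹ * (K ^ d)⁻¹), ENNReal.ofReal_pos.2 (by positivity), ?_, ?_⟩
  · rw [ENNReal.ofReal_le_one]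
    have h1 : C⁻¹ ≤ 1 := inv_le_one_of_one_le₀ hC
    have h2 : (K ^ d)⁻¹ ≤ 1 := inv_le_one_of_one_le₀ hKd
    exact mul_le_one₀ (mul_le_one₀ h1 (by positivity) h1) (by positivity) h2
  rintro _ ⟨j, k, rfl⟩
  set c := ENNReal.ofReal (C⁻¹ * C⁻¹ * (K ^ d)⁻¹) with hc
  set r := δ ^ (j + m) with hr
  have hr0 : 0 < r := by positivity
  have hKr : K * r ≤ D := by
    have : r ≤ δ ^ m := pow_le_pow_of_le_one hδ0.le hδ1.le (by omega)
    nlinarith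
  have hrD : r ≤ D := by nlinarith
  set G : Set (Set X) := {A | (∃ k', A = 𝒟.Q (j + m) k') ∧ A ⊆ 𝒟.Q j k} with hG
  have hGball : ∀ A ∈ G, ∃ y, ball y r ⊆ A ∧ A ⊆ ball y (K * r) := by
    rintro _ ⟨⟨k', rfl⟩, _⟩
    obtain ⟨y, _, hy⟩ := 𝒟.quasiball (j + m) k'
    exact ⟨y, hy⟩
  choose! y hy1 hy2 using hGball
  have hlow : ∀ z : X, ENNReal.ofReal (C⁻¹ * r ^ d) ≤ μ (ball z r) := fun z =>
    (hreg z r hr0 ((ENNReal.ofReal_le_ofReal hrD).trans hDd)).1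
  have hup : ∀ A ∈ G, c * μ A ≤ μ (ball (y A) r) := by
    intro A hA
    have h1 := (hreg (y A) (K * r) (by positivity)
      ((ENNReal.ofReal_le_ofReal hKr).trans hDd)).2
    calc c * μ A ≤ c * ENNReal.ofReal (C * (K * r) ^ d) := by
          gcongr
          exact (measure_mono (hy2 A hA)).trans h1
      _ = ENNReal.ofReal (C⁻¹ * r ^ d) := by
          rw [hc, ← ENNReal.ofReal_mul (by positivity), Real.mul_rpow hK0.le hr0.le]
          congr 1
          field_simp
      _ ≤ _ := hlow _
  have hsumU : ∑' A : G, μ (ball (y A) r) ≤ μ (⋃ A : G, ball (y A) r) := by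
    refine tsum_meas_le_meas_iUnion_of_disjoint μ (fun A => measurableSet_ball) ?_
    intro A B hAB
    refine Set.disjoint_left.2 fun z hzA hzB => hAB (Subtype.ext ?_)
    have hzA' := hy1 A A.2 hzA
    have hzB' := hy1 B B.2 hzB
    obtain ⟨⟨kA, hA⟩, -⟩ := A.2
    obtain ⟨⟨kB, hB⟩, -⟩ := B.2
    rw [hA] at hzA' ⊢
    rw [hB] at hzB' ⊢
    exact (DyadicDecomp.subset_of_inter_nonempty le_rfl ⟨z, hzA', hzB'⟩).antisymm
      (DyadicDecomp.subset_of_inter_nonempty le_rfl ⟨z, hzB', hzA'⟩)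
  refine ⟨⋃ A : G, ball (y A) r, isOpen_iUnion fun A => isOpen_ball,
    iUnion_subset fun A => (hy1 A A.2).trans A.2.2, le_trans ?_ hsumU⟩
  by_cases hfin : G.Finite
  · have hcov : 𝒟.Q j k ⊆ ⋃ A ∈ G, A := by
      intro x hx
      obtain ⟨k', hk'⟩ := 𝒟.exists_mem (j + m) x
      exact mem_biUnion (show 𝒟.Q (j + m) k' ∈ G from ⟨⟨k', rfl⟩,
        DyadicDecomp.subset_of_inter_nonempty (by omega) ⟨x, hk', hx⟩⟩) hk'
    calc c * μ (𝒟.Q j k) ≤ c * ∑' A : G, μ (A : Set X) := by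
          gcongr
          exact (measure_mono hcov).trans (measure_biUnion_le μ hfin.countable fun A => A)
      _ = ∑' A : G, c * μ (A : Set X) := ENNReal.tsum_mul_left.symm
      _ ≤ _ := ENNReal.tsum_le_tsum fun A => hup A A.2
  · -- infinitely many disjoint balls of measure bounded below have a union of infinite measure
    have : Infinite G := Set.infinite_coe_iff.2 hfin
    have h1 : ∑' _ : G, ENNReal.ofReal (C⁻¹ * r ^ d) = ∞ :=
      ENNReal.tsum_const_eq_top_of_ne_zero (ENNReal.ofReal_pos.2 (by positivity)).ne'
    have h2 : ∑' A : G, μ (ball (y A) r) = ∞ :=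
      top_le_iff.1 (h1 ▸ ENNReal.tsum_le_tsum fun A => hlow _)
    rw [h2]
    exact le_top

/-! ### From a proportion to equality -/

/-- Under condition (iv), a cover of `F ∩ Q` by cubes of finite total cost covers almost all of
`Q`. -/
lemma measure_cube_diff_eq_zero (hreg : AhlforsRegular μ d C) (hδ0 : 0 < δ) (hd : 0 < d)
    (hs : 0 < s) (hsd : s ≤ d) {F : Set X} {c : ℝ≥0∞} (hc0 : 0 < c) (hc1 : c ≤ 1)
    (h : ∀ Q, 𝒟.IsCube Q → c * netContent 𝒟 μ d s Q ≤ netContent 𝒟 μ d s (F ∩ Q))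
    {Q : Set X} (hQ : 𝒟.IsCube Q) {S : Set (Set X)} (hSc : S.Countable)
    (hS : ∀ A ∈ S, 𝒟.IsCube A) (hFS : F ∩ Q ⊆ ⋃₀ S)
    (hfin : ∑' A : S, μ (A : Set X) ^ (s / d) ≠ ∞) : μ (Q \ ⋃₀ S) = 0 := by
  have hctop : c ≠ ∞ := ne_top_of_le_ne_top ENNReal.one_ne_top hc1
  obtain ⟨j, k, rfl⟩ := hQ
  choose! gen idx hgen using hS
  have hScube : ∀ A ∈ S, 𝒟.IsCube A := fun A hA => ⟨_, _, hgen A hA⟩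
  -- the estimate by the cost of all but finitely many members of `S`
  have key : ∀ t : Finset S, c * μ (𝒟.Q j k \ ⋃₀ S) ^ (s / d) ≤
      ∑' A : {A : S // A ∉ t}, μ ((A : S) : Set X) ^ (s / d) := by
    intro t
    set T : Set (Set X) := (Subtype.val : S → Set X) '' {A : S | A ∉ t} with hT
    have hTsum : ∑' A : {A : S // A ∉ t}, μ ((A : S) : Set X) ^ (s / d)
        = ∑' A : T, μ (A : Set X) ^ (s / d) :=
      (tsum_image (fun A : Set X => μ A ^ (s / d)) Subtype.val_injective.injOn).symm
    have hTS : T ⊆ S := by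
      rintro _ ⟨A, _, rfl⟩
      exact A.2
    rw [hTsum]
    set N := j + t.sup (fun A : S => gen A) with hN
    set G : Set (Set X) := {A | (∃ k', A = 𝒟.Q N k') ∧ (A ∩ (𝒟.Q j k \ ⋃₀ S)).Nonempty} with hG
    have hGcube : ∀ A ∈ G, 𝒟.IsCube A := by
      rintro A ⟨⟨k', hk'⟩, _⟩
      exact ⟨N, k', hk'⟩
    have hGT : ∑' A : G, c * μ (A : Set X) ^ (s / d) ≤ ∑' A : T, μ (A : Set X) ^ (s / d) := by
      refine tsum_le_tsum_of_pairwiseDisjoint (g := fun A => c * μ A ^ (s / d))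
        (h := fun A => μ A ^ (s / d)) ?_ (fun A hA => (hScube A (hTS hA)).nonempty) ?_
      · rintro _ ⟨⟨a, rfl⟩, _⟩ _ ⟨⟨b, rfl⟩, _⟩ hAB
        exact (DyadicDecomp.subset_of_inter_nonempty le_rfl hAB).antisymm
          (DyadicDecomp.subset_of_inter_nonempty le_rfl (inter_comm _ _ ▸ hAB))
      · rintro _ ⟨⟨a, rfl⟩, x, hxa, hxQ, hxS⟩
        have haQ : 𝒟.Q N a ⊆ 𝒟.Q j k :=
          DyadicDecomp.subset_of_inter_nonempty (by omega) ⟨x, hxa, hxQ⟩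
        have hnot : ∀ A ∈ S, ¬ 𝒟.Q N a ⊆ A := fun A hA hle => hxS ⟨A, hA, hle hxa⟩
        refine le_trans ?_ ((h _ ⟨N, a, rfl⟩).trans (netContent_le
          (hSc.mono fun A hA => hTS hA.1) (fun A hA => hScube A (hTS hA.1)) ?_))
        · gcongr
          exact measure_rpow_le_netContent hd hs hsd _
        · rintro z ⟨hzF, hza⟩
          obtain ⟨A, hA, hzA⟩ := hFS ⟨hzF, haQ hza⟩
          have hAa := ((hScube A hA).subset_or_subset ⟨N, a, rfl⟩ ⟨z, hzA, hza⟩).resolve_right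
            (hnot A hA)
          refine ⟨A, ⟨⟨⟨A, hA⟩, fun hAt => hnot A hA ?_, rfl⟩, hAa⟩, hzA⟩
          -- a member of `t` has generation at most `N`
          have hle : gen A ≤ N := by
            have := Finset.le_sup (f := fun A : S => gen A) hAt
            simp only at this
            omega
          rw [hgen A hA] at hzA ⊢
          exact DyadicDecomp.subset_of_inter_nonempty hle ⟨z, hza, hzA⟩
    rw [ENNReal.tsum_mul_left] at hGT
    have hTfin : ∑' A : T, μ (A : Set X) ^ (s / d) ≠ ∞ :=
      ne_top_of_le_ne_top hfin (ENNReal.tsum_mono_subtype (fun A : Set X => μ A ^ (s / d)) hTS)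
    have hGc : G.Countable := by
      refine countable_of_tsum_ne_top hreg hδ0 hd hs hGcube fun htop => hTfin ?_
      rw [htop, ENNReal.mul_top hc0.ne'] at hGT
      exact top_le_iff.1 hGT
    refine le_trans ?_ hGT
    gcongr
    refine le_trans (ENNReal.rpow_le_rpow (measure_mono ?_) (by positivity))
      (measure_sUnion_rpow_le hGc hd hs hsd)
    intro x hx
    obtain ⟨a, ha⟩ := 𝒟.exists_mem N x
    exact ⟨_, ⟨⟨a, rfl⟩, x, ha, hx⟩, ha⟩
  have h0 : c * μ (𝒟.Q j k \ ⋃₀ S) ^ (s / d) ≤ 0 :=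
    ge_of_tendsto' (ENNReal.tendsto_tsum_compl_atTop_zero hfin) key
  have h1 := (mul_eq_zero.1 (nonpos_iff_eq_zero.1 h0)).resolve_left hc0.ne'
  exact (ENNReal.rpow_eq_zero_iff_of_pos (by positivity)).1 h1

/-- The implication (iv) ⇒ (i). -/
lemma netContent_cube_le_inter (hreg : AhlforsRegular μ d C) (hδ0 : 0 < δ) (hd : 0 < d)
    (hs : 0 < s) (hsd : s ≤ d) {F : Set X} {c : ℝ≥0∞} (hc0 : 0 < c) (hc1 : c ≤ 1)
    (h : ∀ Q, 𝒟.IsCube Q → c * netContent 𝒟 μ d s Q ≤ netContent 𝒟 μ d s (F ∩ Q))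
    {Q : Set X} (hQ : 𝒟.IsCube Q) : netContent 𝒟 μ d s Q ≤ netContent 𝒟 μ d s (F ∩ Q) := by
  refine le_netContent fun S hSc hS hFS hfin => ?_
  have h0 := measure_cube_diff_eq_zero hreg hδ0 hd hs hsd hc0 hc1 h hQ hSc hS hFS hfin
  have h1 : μ Q ≤ μ (⋃₀ S) := measure_mono_ae (ae_le_set.2 h0)
  exact (netContent_cube_le hQ).trans ((ENNReal.rpow_le_rpow h1 (by positivity)).trans
    (measure_sUnion_rpow_le hSc hd hs hsd))

end

/-! ### The equivalence -/

/-- Theorem B: for a subset `F` of an Ahlfors regular space of dimension `d` with a dyadic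
decomposition, and `0 < s ≤ d`, the four conditions on the net content `D^s_∞` are
equivalent. -/
theorem netContent_large_intersection_tfae {X : Type*} [MetricSpace X] [MeasurableSpace X]
    [BorelSpace X] (μ : Measure X) (d C : ℝ) (hd : 0 < d)
    (hreg : AhlforsRegular μ d C) (δ K : ℝ) (hδ0 : 0 < δ) (hδ1 : δ < 1) (hK : 1 ≤ K)
    (𝒟 : DyadicDecomp X δ K) (F : Set X) (s : ℝ) (hs : 0 < s) (hsd : s ≤ d) :
    [(∀ Q : Set X, 𝒟.IsCube Q → netContent 𝒟 μ d s (F ∩ Q) = netContent 𝒟 μ d s Q),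
     (∀ U : Set X, IsOpen U → netContent 𝒟 μ d s (F ∩ U) = netContent 𝒟 μ d s U),
     (∃ c : ℝ≥0∞, 0 < c ∧ c ≤ 1 ∧ ∀ U : Set X, IsOpen U →
        c * netContent 𝒟 μ d s U ≤ netContent 𝒟 μ d s (F ∩ U)),
     (∃ c : ℝ≥0∞, 0 < c ∧ c ≤ 1 ∧ ∀ Q : Set X, 𝒟.IsCube Q →
        c * netContent 𝒟 μ d s Q ≤ netContent 𝒟 μ d s (F ∩ Q))].TFAE := by
  tfae_have 1 → 2 := fun h U hU =>
    (netContent_mono inter_subset_right).antisymm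
      (netContent_open_le hreg hδ0 hδ1 hK hd hs hsd h hU)
  tfae_have 2 → 3 := fun h =>
    ⟨1, zero_lt_one, le_rfl, fun U hU => by rw [one_mul, h U hU]⟩
  tfae_have 3 → 4 := by
    rintro ⟨c, hc0, hc1, h⟩
    rcases subsingleton_or_nontrivial X with hX | hX
    · exact ⟨c, hc0, hc1, fun Q _ => h Q (isOpen_discrete Q)⟩
    · obtain ⟨b, hb0, hb1, hb⟩ := exists_open_subset_cube (𝒟 := 𝒟) hreg hδ0 hδ1 hK hd
      have ha : 0 < s / d := by positivity
      refine ⟨c * b ^ (s / d), ENNReal.mul_pos hc0.ne' ?_,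
        mul_le_one' hc1 (ENNReal.rpow_le_one hb1 ha.le), fun Q hQ => ?_⟩
      · exact fun h0 => hb0.ne' ((ENNReal.rpow_eq_zero_iff_of_pos ha).1 h0)
      obtain ⟨U, hU, hUQ, hbU⟩ := hb Q hQ
      calc c * b ^ (s / d) * netContent 𝒟 μ d s Q
          ≤ c * b ^ (s / d) * μ Q ^ (s / d) := by
            gcongr
            exact netContent_cube_le hQ
        _ = c * (b * μ Q) ^ (s / d) := by
            rw [mul_assoc, ENNReal.mul_rpow_of_nonneg _ _ ha.le]
        _ ≤ c * μ U ^ (s / d) := by gcongr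
        _ ≤ c * netContent 𝒟 μ d s U := by
            gcongr
            exact measure_rpow_le_netContent hd hs hsd U
        _ ≤ netContent 𝒟 μ d s (F ∩ U) := h U hU
        _ ≤ netContent 𝒟 μ d s (F ∩ Q) := netContent_mono (inter_subset_inter_right F hUQ)
  tfae_have 4 → 1 := by
    rintro ⟨c, hc0, hc1, h⟩ Q hQ
    exact (netContent_mono inter_subset_right).antisymm
      (netContent_cube_le_inter hreg hδ0 hd hs hsd hc0 hc1 h hQ)
  tfae_finish
end
end

section
/- Let X be an Ahlfors regular space of dimension d and let 0 < t ≤ s ≤ d. Then every subset of X belonging to the class G^s also belongs to the class G^t, i.e., G^s ⊆ G^t. -/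
/-!
Write `Hˢ` for the Hausdorff content. The regularity of `μ` enters through two facts about small
balls. First, `Hˢ(B(x,r)) ≳ r^s` for `s ≤ d` (`le_hContent_ball`), by the mass distribution
principle. Second, a set of diameter `δ` meets boundedly many balls `B(x_j, r_j)` with `r_j ≥ δ` and
`B(x_j, 2 r_j)` pairwise disjoint (`tsum_meets_le`), by comparing volumes.

Let `F ∈ G^s`, let `U` be open and let `{A}` be a countable cover of `F ∩ U`. Choose for each `x ∈ U`
a small radius `r_x` with `B(x, r_x) ⊆ U`. If some `A` of diameter larger than `r_x` meets
`B(x, r_x)`, then `x` lies in the neighbourhood of `A` of width `diam A`, whose diameter is at most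
`3 diam A`. Otherwise all `A` meeting `B(x, r_x)` have diameter at most `r_x`, so
`r_x^s ≲ Hˢ(B(x, r_x)) ≲ Hˢ(F ∩ B(x, r_x)) ≤ ∑ diam(A)^s ≤ r_x^(s-t) ∑ diam(A)^t`,
the sums being over the `A` that meet `B(x, r_x)`; hence `r_x^t ≲ ∑ diam(A)^t`. The Vitali covering
lemma selects from the points of the second kind a family whose doubled balls are disjoint and whose
tenfold balls cover all of these points. Summing over this family, with bounded overlap, gives a
cover of `U` whose `t`-sum is at most a constant times `∑ diam(A)^t`.
-/

open MeasureTheory Metric Set ENNReal Filter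

noncomputable section

/-- The Hausdorff content `H^s_∞(E)`: infimum of `Σ diam(Eₙ)^s` over countable covers of `E`. -/
def hContent {X : Type*} [MetricSpace X] (s : ℝ) (E : Set X) : ℝ≥0∞ :=
  ⨅ (S : Set (Set X)) (_ : S.Countable) (_ : E ⊆ ⋃₀ S),
    ∑' A : S, EMetric.diam (A : Set X) ^ s

/-- A `G_δ` set `F` belongs to the class `G^s` if there is `0 < c ≤ 1` with
`H^s_∞(F ∩ U) ≥ c · H^s_∞(U)` for every open `U`. -/
def MemGs {X : Type*} [MetricSpace X] (s : ℝ) (F : Set X) : Prop :=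
  IsGδ F ∧ ∃ c : ℝ≥0∞, 0 < c ∧ c ≤ 1 ∧
    ∀ U : Set X, IsOpen U → c * hContent s U ≤ hContent s (F ∩ U)

/-- The Ahlfors bounds, in `ℝ≥0∞`, for balls of radius at most `ρ`. -/
def RegularUpTo {X : Type*} [MetricSpace X] [MeasurableSpace X]
    (μ : Measure X) (d : ℝ) (a b : ℝ≥0∞) (ρ : ℝ) : Prop :=
  ∀ (x : X) (r : ℝ), 0 < r → r ≤ ρ →
    a * ENNReal.ofReal r ^ d ≤ μ (ball x r) ∧ μ (ball x r) ≤ b * ENNReal.ofReal r ^ d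

/-! ### Bounds for the Hausdorff content -/

section Content

variable {X : Type*} [MetricSpace X]

lemma hContent_le_tsum {ι : Type*} [Countable ι] (s : ℝ) (E : Set X) (A : ι → Set X)
    (h : E ⊆ ⋃ i, A i) : hContent s E ≤ ∑' i, Metric.ediam (A i) ^ s := by
  unfold hContent
  refine (iInf_le _ (range A)).trans ((iInf_le _ (countable_range A)).trans
    ((iInf_le _ (by rwa [sUnion_range])).trans ?_))
  exact ENNReal.tsum_le_tsum_comp_of_surjective rangeFactorization_surjective
    (fun B : range A => Metric.ediam (B : Set X) ^ s)

lemma le_hContent (s : ℝ) (E : Set X) (m : ℝ≥0∞)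
    (h : ∀ S : Set (Set X), S.Countable → E ⊆ ⋃₀ S →
      m ≤ ∑' A : S, Metric.ediam (A : Set X) ^ s) : m ≤ hContent s E :=
  le_iInf fun S => le_iInf fun hS => le_iInf fun hE => h S hS hE

end Content

/-! ### Consequences of regularity -/

section Regular

variable {X : Type*} [MetricSpace X] [MeasurableSpace X] {μ : Measure X} {d : ℝ} {a b : ℝ≥0∞}
  {ρ : ℝ}

lemma measure_le_of_regular (hd : 0 < d) (hb : b ≠ ∞) (hρ : 0 < ρ) (h : RegularUpTo μ d a b ρ)
    (A : Set X) (hA : 2 * Metric.ediam A ≤ ENNReal.ofReal ρ) :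
    μ A ≤ b * 2 ^ d * Metric.ediam A ^ d := by
  rcases A.eq_empty_or_nonempty with rfl | ⟨p, hp⟩
  · simp
  rcases eq_or_ne (Metric.ediam A) 0 with h0 | h0
  · have hsub : ∀ ε : ℝ, 0 < ε → A ⊆ ball p ε := fun ε hε y hy => by
      have := Metric.edist_le_ediam_of_mem hy hp
      rw [h0, nonpos_iff_eq_zero, edist_eq_zero] at this
      simpa [this] using hε
    have hlim : Tendsto (fun ε : ℝ => b * ENNReal.ofReal ε ^ d) (nhdsWithin 0 (Ioi 0))
        (nhds (b * ENNReal.ofReal 0 ^ d)) := by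
      refine ENNReal.Tendsto.const_mul ?_ (Or.inr hb)
      exact (((ENNReal.continuous_rpow_const.comp ENNReal.continuous_ofReal).tendsto
        (0 : ℝ))).mono_left nhdsWithin_le_nhds
    have := ge_of_tendsto hlim (b := μ A) (by
      filter_upwards [Ioc_mem_nhdsGT hρ] with ε hε
      exact (measure_mono (hsub ε hε.1)).trans (h p ε hε.1 hε.2).2)
    simpa [h0, hd] using this
  · have htop : Metric.ediam A ≠ ∞ := by
      intro ht
      simp [ht] at hA
    set D := (Metric.ediam A).toReal with hD
    have hDe : Metric.ediam A = ENNReal.ofReal D := (ENNReal.ofReal_toReal htop).symm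
    have hDpos : 0 < D := ENNReal.toReal_pos h0 htop
    have h2 : (2 : ℝ≥0∞) * Metric.ediam A = ENNReal.ofReal (2 * D) := by
      rw [hDe, ENNReal.ofReal_mul (by norm_num)]; simp
    rw [h2] at hA
    have hle : 2 * D ≤ ρ := (ENNReal.ofReal_le_ofReal_iff hρ.le).1 hA
    have hsub : A ⊆ ball p (2 * D) := fun y hy => by
      have := Metric.edist_le_ediam_of_mem hy hp
      rw [hDe, edist_le_ofReal hDpos.le] at this
      rw [mem_ball]; linarith
    calc μ A ≤ μ (ball p (2 * D)) := measure_mono hsub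
      _ ≤ b * ENNReal.ofReal (2 * D) ^ d := (h p _ (by linarith) hle).2
      _ = _ := by rw [← h2, ENNReal.mul_rpow_of_nonneg _ _ hd.le, mul_assoc]

/-- Mass distribution principle: a ball of small radius `r` has `s`-content at least a multiple
of `r ^ s`, for `s ≤ d`. -/
lemma le_hContent_ball (hd : 0 < d) (hab : a ≤ b) (hb : b ≠ ∞) (hρ : 0 < ρ)
    (h : RegularUpTo μ d a b ρ) {s : ℝ} (hs : 0 < s) (hsd : s ≤ d) (x : X) (r : ℝ) (hr : 0 < r)
    (hrρ : 2 * r ≤ ρ) :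
    a * ENNReal.ofReal r ^ s ≤ b * 2 ^ d * hContent s (ball x r) := by
  have h2 : (1 : ℝ≥0∞) ≤ 2 ^ d := ENNReal.one_le_rpow (by norm_num) hd
  have hb2 : b * 2 ^ d ≠ ∞ := ENNReal.mul_ne_top hb (by simp)
  have hR0 : ENNReal.ofReal r ≠ 0 := by simpa using hr
  have hRt : ENNReal.ofReal r ≠ ∞ := ENNReal.ofReal_ne_top
  rcases eq_or_ne (b * 2 ^ d) 0 with h0 | h0
  · have : a = 0 := by
      have : b = 0 := by
        rcases mul_eq_zero.1 h0 with h | h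
        · exact h
        · rw [h] at h2; simp at h2
      rw [this] at hab; simpa using hab
    simp [this]
  rw [← ENNReal.div_le_iff' h0 hb2]
  refine le_hContent s _ _ fun S hS hcov => ?_
  rw [ENNReal.div_le_iff' h0 hb2]
  by_cases hbig : ∃ A ∈ S, ENNReal.ofReal r < Metric.ediam A
  · obtain ⟨A, hA, hAr⟩ := hbig
    refine mul_le_mul' (hab.trans (le_mul_of_one_le_right' h2)) ?_
    exact (ENNReal.rpow_le_rpow hAr.le hs.le).trans
      (ENNReal.le_tsum (f := fun A : S => Metric.ediam (A : Set X) ^ s) ⟨A, hA⟩)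
  · push Not at hbig
    have hpow : ∀ δ : ℝ≥0∞, δ ≤ ENNReal.ofReal r →
        δ ^ d ≤ ENNReal.ofReal r ^ (d - s) * δ ^ s := fun δ hδ => by
      calc δ ^ d = δ ^ ((d - s) + s) := by ring_nf
        _ = δ ^ (d - s) * δ ^ s := ENNReal.rpow_add_of_nonneg _ _ (by linarith) hs.le
        _ ≤ _ := by gcongr
    have key : a * ENNReal.ofReal r ^ s * ENNReal.ofReal r ^ (d - s) ≤
        b * 2 ^ d * (∑' A : S, Metric.ediam (A : Set X) ^ s) * ENNReal.ofReal r ^ (d - s) := by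
      calc a * ENNReal.ofReal r ^ s * ENNReal.ofReal r ^ (d - s)
          = a * ENNReal.ofReal r ^ d := by
            rw [mul_assoc, ← ENNReal.rpow_add_of_nonneg _ _ hs.le (by linarith)]
            ring_nf
        _ ≤ μ (ball x r) := (h x r hr (by linarith)).1
        _ ≤ μ (⋃ A ∈ S, A) := measure_mono (by rwa [← sUnion_eq_biUnion])
        _ ≤ ∑' A : S, μ (A : Set X) := measure_biUnion_le μ hS _
        _ ≤ ∑' A : S, b * 2 ^ d * (ENNReal.ofReal r ^ (d - s) *
              Metric.ediam (A : Set X) ^ s) := by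
            refine ENNReal.tsum_le_tsum fun A => ?_
            refine (measure_le_of_regular hd hb hρ h A ?_).trans ?_
            · calc 2 * Metric.ediam (A : Set X) ≤ 2 * ENNReal.ofReal r := by
                    gcongr; exact hbig A A.2
                _ = ENNReal.ofReal (2 * r) := by
                    rw [ENNReal.ofReal_mul (by norm_num)]; simp
                _ ≤ _ := ENNReal.ofReal_le_ofReal hrρ
            · gcongr
              exact hpow _ (hbig A A.2)
        _ = _ := by
            rw [ENNReal.tsum_mul_left, ENNReal.tsum_mul_left]; ring
    exact (ENNReal.mul_le_mul_iff_left (by simp [ENNReal.rpow_eq_zero_iff, hR0, hRt])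
      (by simp [ENNReal.rpow_eq_top_iff, hR0, hRt])).1 key

open Classical in
/-- Bounded overlap: a set meets boundedly many balls `ball x (r x)` that are not smaller than it
and whose doubles are disjoint. The count is weighted by the `t`-th power of the diameter, so that
sets of diameter zero need no bound. -/
lemma tsum_meets_le [BorelSpace X] (hd : 0 < d) (ha : a ≠ 0) (hat : a ≠ ∞)
    (h : RegularUpTo μ d a b ρ) {t : ℝ} (ht : 0 < t)
    (W : Set X) (r : X → ℝ) (hr : ∀ x ∈ W, 0 < r x) (hrρ : ∀ x ∈ W, 2 * r x ≤ ρ)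
    (hW : W.PairwiseDisjoint fun x => closedBall x (2 * r x)) (A : Set X)
    (hA : ∀ x ∈ W, (A ∩ ball x (r x)).Nonempty → Metric.ediam A ≤ ENNReal.ofReal (r x)) :
    ∑' x : W, (if (A ∩ ball (x : X) (r x)).Nonempty then Metric.ediam A ^ t else 0) ≤
      b * 2 ^ d / a * Metric.ediam A ^ t := by
  rcases eq_or_ne (Metric.ediam A) 0 with h0 | h0
  · simp [h0, ht]
  by_cases hne : ∃ x ∈ W, (A ∩ ball x (r x)).Nonempty
  swap
  · push Not at hne
    have : ∀ x : W, (if (A ∩ ball (x : X) (r x)).Nonempty then Metric.ediam A ^ t else 0) = 0 :=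
      fun x => if_neg (by simp [hne x x.2])
    simp [this]
  obtain ⟨x₀, hx₀, p, hpA, hp⟩ := hne
  have hδ₀ := hA x₀ hx₀ ⟨p, hpA, hp⟩
  have htop : Metric.ediam A ≠ ∞ := (hδ₀.trans_lt ENNReal.ofReal_lt_top).ne
  set D := (Metric.ediam A).toReal with hD
  have hDe : Metric.ediam A = ENNReal.ofReal D := (ENNReal.ofReal_toReal htop).symm
  have hDpos : 0 < D := ENNReal.toReal_pos h0 htop
  have hDr : ∀ x ∈ W, (A ∩ ball x (r x)).Nonempty → D ≤ r x := fun x hx hn => by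
    have := hA x hx hn
    rwa [hDe, ENNReal.ofReal_le_ofReal_iff (hr x hx).le] at this
  have hDρ : 2 * D ≤ ρ := by
    have := hDr x₀ hx₀ ⟨p, hpA, hp⟩
    have := hrρ x₀ hx₀
    linarith
  let B : W → Set X := fun x => ⋃ q ∈ A ∩ ball (x : X) (r x), ball q D
  have hBsub : ∀ x : W, B x ⊆ closedBall (x : X) (2 * r x) := fun x y hy => by
    simp only [B, mem_iUnion] at hy
    obtain ⟨q, hq, hy⟩ := hy
    have h1 := hDr x x.2 ⟨q, hq⟩
    have h2 := hq.2
    rw [mem_ball] at h2 hy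
    rw [mem_closedBall]
    linarith [dist_triangle y q x]
  have hBsub' : (⋃ x, B x) ⊆ ball p (2 * D) := fun y hy => by
    simp only [B, mem_iUnion] at hy
    obtain ⟨x, q, hq, hy⟩ := hy
    have h1 := Metric.edist_le_ediam_of_mem hq.1 hpA
    rw [hDe, edist_le_ofReal hDpos.le] at h1
    rw [mem_ball] at hy ⊢
    linarith [dist_triangle y q p]
  have hBm : ∀ x, MeasurableSet (B x) := fun x =>
    (isOpen_biUnion fun _ _ => isOpen_ball).measurableSet
  have hBd : Pairwise (Function.onFun Disjoint B) := fun x y hxy =>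
    (hW x.2 y.2 (fun e => hxy (Subtype.ext e))).mono (hBsub x) (hBsub y)
  have hcount : (∑' x : W, (if (A ∩ ball (x : X) (r x)).Nonempty then (1 : ℝ≥0∞) else 0)) ≤
      b * 2 ^ d / a := by
    rw [ENNReal.le_div_iff_mul_le (Or.inl ha) (Or.inl hat)]
    have hδ0 : Metric.ediam A ^ d ≠ 0 := by simp [ENNReal.rpow_eq_zero_iff, h0, htop]
    have hδt : Metric.ediam A ^ d ≠ ∞ := by simp [ENNReal.rpow_eq_top_iff, h0, htop]
    rw [← ENNReal.mul_le_mul_iff_left hδ0 hδt, mul_assoc, ← ENNReal.tsum_mul_right]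
    calc _ ≤ ∑' x : W, μ (B x) := by
          refine ENNReal.tsum_le_tsum fun x => ?_
          split_ifs with hn
          · obtain ⟨q, hq⟩ := hn
            rw [one_mul, hDe]
            exact (h q D hDpos (by linarith)).1.trans
              (measure_mono (subset_biUnion_of_mem (u := fun q => ball q D) hq))
          · simp
      _ ≤ μ (⋃ x, B x) := tsum_meas_le_meas_iUnion_of_disjoint μ hBm hBd
      _ ≤ μ (ball p (2 * D)) := measure_mono hBsub'
      _ ≤ b * ENNReal.ofReal (2 * D) ^ d := (h p _ (by linarith) hDρ).2
      _ = b * 2 ^ d * Metric.ediam A ^ d := by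
          rw [ENNReal.ofReal_mul (by norm_num), ← hDe, ENNReal.mul_rpow_of_nonneg _ _ hd.le,
            mul_assoc]
          simp
  calc _ = (∑' x : W, (if (A ∩ ball (x : X) (r x)).Nonempty then (1 : ℝ≥0∞) else 0)) *
        Metric.ediam A ^ t := by
        rw [← ENNReal.tsum_mul_right]
        refine tsum_congr fun x => ?_
        split_ifs <;> simp
    _ ≤ _ := by gcongr

end Regular

/-! ### Enlarging a cover of `F ∩ U` to a cover of `U` -/

section Covering

variable {X : Type*} [MetricSpace X]

lemma ediam_neighbourhood_le (A : Set X) :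
    Metric.ediam {y | ∃ p ∈ A, edist y p ≤ Metric.ediam A} ≤ 3 * Metric.ediam A := by
  refine Metric.ediam_le ?_
  rintro y ⟨p, hp, hyp⟩ z ⟨q, hq, hzq⟩
  calc edist y z ≤ edist y p + edist p q + edist q z := edist_triangle4 _ _ _ _
    _ ≤ Metric.ediam A + Metric.ediam A + Metric.ediam A := by
        gcongr
        · exact Metric.edist_le_ediam_of_mem hp hq
        · rwa [edist_comm]
    _ = _ := by ring

lemma ediam_closedBall_le_ofReal (x : X) (r : ℝ) (hr : 0 ≤ r) :
    Metric.ediam (closedBall x r) ≤ 2 * ENNReal.ofReal r := by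
  refine Metric.ediam_le fun y hy z hz => ?_
  rw [mem_closedBall, ← edist_le_ofReal hr] at hy hz
  calc edist y z ≤ edist y x + edist x z := edist_triangle _ _ _
    _ ≤ ENNReal.ofReal r + ENNReal.ofReal r := by
        gcongr
        rwa [edist_comm]
    _ = _ := by ring

/-- The lower bound for the balls of a point all of whose nearby covering sets are small. -/
lemma rpow_le_tsum_meets {s t : ℝ} (ht : 0 < t) (hts : t ≤ s) {c k : ℝ≥0∞} {F U : Set X}
    (hF : ∀ V : Set X, IsOpen V → c * hContent s V ≤ hContent s (F ∩ V))
    {x : X} {r : ℝ} (hr : 0 < r) (hxU : ball x r ⊆ U)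
    (hk : k * ENNReal.ofReal r ^ s ≤ hContent s (ball x r))
    {S : Set (Set X)} (hS : S.Countable) (hcov : F ∩ U ⊆ ⋃₀ S)
    (hsmall : ∀ A ∈ S, (A ∩ ball x r).Nonempty → Metric.ediam A ≤ ENNReal.ofReal r) :
    open Classical in
    c * k * ENNReal.ofReal r ^ t ≤
      ∑' A : S, (if ((A : Set X) ∩ ball x r).Nonempty then Metric.ediam (A : Set X) ^ t else 0) := by
  classical
  have hR0 : ENNReal.ofReal r ≠ 0 := by simpa using hr
  have hRt : ENNReal.ofReal r ≠ ∞ := ENNReal.ofReal_ne_top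
  have hs : 0 < s := ht.trans_le hts
  have : Countable S := hS.to_subtype
  have key : c * k * ENNReal.ofReal r ^ t * ENNReal.ofReal r ^ (s - t) ≤
      (∑' A : S, (if ((A : Set X) ∩ ball x r).Nonempty then Metric.ediam (A : Set X) ^ t else 0))
        * ENNReal.ofReal r ^ (s - t) := by
    calc c * k * ENNReal.ofReal r ^ t * ENNReal.ofReal r ^ (s - t)
        = c * (k * ENNReal.ofReal r ^ s) := by
          rw [mul_assoc, ← ENNReal.rpow_add_of_nonneg _ _ ht.le (by linarith), mul_assoc]
          ring_nf
      _ ≤ c * hContent s (ball x r) := by gcongr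
      _ ≤ hContent s (F ∩ ball x r) := hF _ isOpen_ball
      _ ≤ ∑' A : S, Metric.ediam ((A : Set X) ∩ ball x r) ^ s := by
          refine hContent_le_tsum s _ _ fun y hy => ?_
          obtain ⟨A, hA, hyA⟩ := hcov ⟨hy.1, hxU hy.2⟩
          exact mem_iUnion.2 ⟨⟨A, hA⟩, hyA, hy.2⟩
      _ ≤ _ := by
          rw [← ENNReal.tsum_mul_right]
          refine ENNReal.tsum_le_tsum fun A => ?_
          split_ifs with hn
          · calc Metric.ediam ((A : Set X) ∩ ball x r) ^ s ≤ Metric.ediam (A : Set X) ^ s :=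
                  ENNReal.rpow_le_rpow (Metric.ediam_mono inter_subset_left) hs.le
              _ = Metric.ediam (A : Set X) ^ (t + (s - t)) := by ring_nf
              _ = Metric.ediam (A : Set X) ^ t * Metric.ediam (A : Set X) ^ (s - t) :=
                  ENNReal.rpow_add_of_nonneg _ _ ht.le (by linarith)
              _ ≤ _ := by
                  gcongr
                  exact hsmall A A.2 hn
          · rw [not_nonempty_iff_eq_empty.1 hn]
            simp [hs]
  exact (ENNReal.mul_le_mul_iff_left (by simp [ENNReal.rpow_eq_zero_iff, hR0, hRt])
    (by simp [ENNReal.rpow_eq_top_iff, hR0, hRt])).1 key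

/-- A cover of `F ∩ U` is turned into a cover of `U` with comparable `t`-sum. -/
lemma hContent_le_of_cover [MeasurableSpace X] [BorelSpace X] {μ : Measure X} {d : ℝ}
    {a b : ℝ≥0∞} {ρ : ℝ} (hd : 0 < d) (ha : a ≠ 0) (hat : a ≠ ∞) (hb : b ≠ ∞) (hρ : 0 < ρ)
    (h : RegularUpTo μ d a b ρ) {s t : ℝ} (ht : 0 < t) (hts : t ≤ s) {c k : ℝ≥0∞} {F U : Set X}
    (hc : c ≠ 0) (hc1 : c ≤ 1) (hk0 : k ≠ 0) (hk1 : k ≤ 1)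
    (hF : ∀ V : Set X, IsOpen V → c * hContent s V ≤ hContent s (F ∩ V))
    (hk : ∀ (x : X) (r : ℝ), 0 < r → 2 * r ≤ ρ →
      k * ENNReal.ofReal r ^ s ≤ hContent s (ball x r))
    (hU : IsOpen U) {S : Set (Set X)} (hS : S.Countable) (hcov : F ∩ U ⊆ ⋃₀ S) :
    c * k * hContent t U ≤
      (3 ^ t + 20 ^ t * (b * 2 ^ d / a)) * ∑' A : S, Metric.ediam (A : Set X) ^ t := by
  classical
  have hScount : Countable S := hS.to_subtype
  set T := ∑' A : S, Metric.ediam (A : Set X) ^ t with hT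
  have h3 : (1 : ℝ≥0∞) ≤ 3 ^ t := ENNReal.one_le_rpow (by norm_num) ht
  rcases eq_or_ne T ∞ with hTt | hTt
  · rw [hTt, ENNReal.mul_top]
    · exact le_top
    · intro h0
      rw [(add_eq_zero.1 h0).1] at h3
      simp at h3
  have hK : b * 2 ^ d / a ≠ ∞ := ENNReal.div_ne_top (ENNReal.mul_ne_top hb (by simp)) ha
  have hck : c * k ≠ 0 := mul_ne_zero hc hk0
  have hck1 : c * k ≤ 1 := mul_le_one' hc1 hk1
  have hex : ∀ x, ∃ r : ℝ, 0 < r ∧ 2 * r ≤ ρ ∧ (x ∈ U → ball x r ⊆ U) := fun x => by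
    by_cases hx : x ∈ U
    · obtain ⟨ε, hε, hεU⟩ := Metric.isOpen_iff.1 hU x hx
      exact ⟨min ε (ρ / 2), by positivity, by linarith [min_le_right ε (ρ / 2)],
        fun _ => (ball_subset_ball (min_le_left _ _)).trans hεU⟩
    · exact ⟨ρ / 2, by positivity, by linarith, fun h => absurd h hx⟩
  choose r hr hrρ hrU using hex
  -- The points near which every covering set is small; all other points of `U` are close to a
  -- covering set, relative to its diameter.
  let G : Set X := {x | x ∈ U ∧
    ∀ A ∈ S, (A ∩ ball x (r x)).Nonempty → Metric.ediam A ≤ ENNReal.ofReal (r x)}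
  obtain ⟨W, hWG, hWd, hWc⟩ := Vitali.exists_disjoint_subfamily_covering_enlargement_closedBall
    G (fun x => x) (fun x => 2 * r x) ρ (fun x _ => hrρ x) 5 (by norm_num)
  have hsum : c * k * ∑' x : W, ENNReal.ofReal (r x) ^ t ≤ b * 2 ^ d / a * T := by
    calc c * k * ∑' x : W, ENNReal.ofReal (r x) ^ t
        = ∑' x : W, c * k * ENNReal.ofReal (r x) ^ t := ENNReal.tsum_mul_left.symm
      _ ≤ ∑' x : W, ∑' A : S, (if ((A : Set X) ∩ ball (x : X) (r x)).Nonempty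
            then Metric.ediam (A : Set X) ^ t else 0) :=
          ENNReal.tsum_le_tsum fun x => rpow_le_tsum_meets ht hts hF (hr x)
            (hrU x (hWG x.2).1) (hk x _ (hr x) (hrρ x)) hS hcov (hWG x.2).2
      _ = ∑' A : S, ∑' x : W, (if ((A : Set X) ∩ ball (x : X) (r x)).Nonempty
            then Metric.ediam (A : Set X) ^ t else 0) := ENNReal.tsum_comm
      _ ≤ ∑' A : S, b * 2 ^ d / a * Metric.ediam (A : Set X) ^ t :=
          ENNReal.tsum_le_tsum fun A => tsum_meets_le hd ha hat h ht W r (fun x _ => hr x)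
            (fun x _ => hrρ x) hWd A (fun x hx => (hWG hx).2 A A.2)
      _ = _ := ENNReal.tsum_mul_left
  -- `X` need not be separable; countability of `W` comes from the finiteness of the sum.
  have hWcount : Countable W := by
    have hfin : ∑' x : W, ENNReal.ofReal (r x) ^ t ≠ ∞ := by
      intro htop
      rw [htop, ENNReal.mul_top hck, top_le_iff] at hsum
      exact ENNReal.mul_ne_top hK hTt hsum
    have := Summable.countable_support_ennreal hfin
    have huniv : (Function.support fun x : W => ENNReal.ofReal (r x) ^ t) = univ := by
      ext x
      simp [ENNReal.rpow_eq_zero_iff, hr]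
    rw [huniv] at this
    exact countable_univ_iff.1 this
  let E : S ⊕ W → Set X := Sum.elim
    (fun A => {y | ∃ p ∈ (A : Set X), edist y p ≤ Metric.ediam (A : Set X)})
    (fun x => closedBall (x : X) (5 * (2 * r x)))
  have hE : U ⊆ ⋃ i, E i := fun x hx => by
    by_cases hxG : x ∈ G
    · obtain ⟨y, hy, hxy⟩ := hWc x hxG
      exact mem_iUnion.2 ⟨Sum.inr ⟨y, hy⟩,
        hxy (mem_closedBall_self (by linarith [hr x]))⟩
    · have : ∃ A ∈ S, (A ∩ ball x (r x)).Nonempty ∧ ENNReal.ofReal (r x) < Metric.ediam A := by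
        by_contra! hcon
        exact hxG ⟨hx, hcon⟩
      obtain ⟨A, hA, ⟨p, hpA, hp⟩, hlt⟩ := this
      refine mem_iUnion.2 ⟨Sum.inl ⟨A, hA⟩, p, hpA, ?_⟩
      rw [mem_ball', ← edist_lt_ofReal] at hp
      exact (hp.trans hlt).le
  have hmain : hContent t U ≤ 3 ^ t * T + 20 ^ t * ∑' x : W, ENNReal.ofReal (r x) ^ t := by
    refine (hContent_le_tsum t U E hE).trans ?_
    rw [Summable.tsum_sum ENNReal.summable ENNReal.summable, hT, ← ENNReal.tsum_mul_left,
      ← ENNReal.tsum_mul_left]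
    refine add_le_add (ENNReal.tsum_le_tsum fun A => ?_) (ENNReal.tsum_le_tsum fun x => ?_)
    · rw [← ENNReal.mul_rpow_of_nonneg _ _ ht.le]
      exact ENNReal.rpow_le_rpow (ediam_neighbourhood_le _) ht.le
    · rw [← ENNReal.mul_rpow_of_nonneg _ _ ht.le]
      refine ENNReal.rpow_le_rpow ?_ ht.le
      refine (ediam_closedBall_le_ofReal (x : X) _ (by linarith [hr x])).trans ?_
      rw [← mul_assoc, ENNReal.ofReal_mul (by norm_num), ← mul_assoc]
      norm_num
  calc c * k * hContent t U
      ≤ c * k * (3 ^ t * T + 20 ^ t * ∑' x : W, ENNReal.ofReal (r x) ^ t) := by gcongr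
    _ = c * k * (3 ^ t * T) + 20 ^ t * (c * k * ∑' x : W, ENNReal.ofReal (r x) ^ t) := by ring
    _ ≤ 1 * (3 ^ t * T) + 20 ^ t * (b * 2 ^ d / a * T) := by gcongr
    _ = _ := by ring

end Covering

/-! ### The inclusion `G^s ⊆ G^t` -/

/-- If `0 < t ≤ s ≤ d`, then `G^s ⊆ G^t`. -/
theorem memGs_mono {X : Type*} [MetricSpace X] [MeasurableSpace X] [BorelSpace X]
    (μ : Measure X) (d C : ℝ) (hd : 0 < d) (hreg : AhlforsRegular μ d C)
    (s t : ℝ) (ht : 0 < t) (hts : t ≤ s) (hsd : s ≤ d) :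
    ∀ F : Set X, MemGs s F → MemGs t F := by
  rintro F ⟨hGδ, c, hc0, hc1, hF⟩
  refine ⟨hGδ, ?_⟩
  rcases eq_or_ne (Metric.ediam (univ : Set X)) 0 with h0 | h0
  · refine ⟨1, one_pos, le_rfl, fun U _ => ?_⟩
    have hU : hContent t U ≤ 0 := by
      refine (hContent_le_tsum (ι := Unit) t U (fun _ => univ)
        fun x _ => mem_iUnion.2 ⟨(), mem_univ x⟩).trans ?_
      simp [h0, ht]
    simp [nonpos_iff_eq_zero.1 hU]
  obtain ⟨ρ, hρ, hρle⟩ : ∃ ρ : ℝ, 0 < ρ ∧ ENNReal.ofReal ρ ≤ Metric.ediam (univ : Set X) := by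
    obtain ⟨q, hq0, hq⟩ := ENNReal.lt_iff_exists_nnreal_btwn.1 (pos_iff_ne_zero.2 h0)
    exact ⟨q, by exact_mod_cast hq0, by simpa using hq.le⟩
  obtain ⟨hC, hreg⟩ := hreg
  have hCpos : 0 < C := by linarith
  set a := ENNReal.ofReal C⁻¹ with ha_def
  set b := ENNReal.ofReal C with hb_def
  have ha : a ≠ 0 := by simpa [ha_def] using hCpos
  have hat : a ≠ ∞ := ENNReal.ofReal_ne_top
  have hb : b ≠ ∞ := ENNReal.ofReal_ne_top
  have hb0 : b ≠ 0 := by simpa [hb_def] using hCpos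
  have hab : a ≤ b := ENNReal.ofReal_le_ofReal ((inv_le_one_of_one_le₀ hC).trans hC)
  have h : RegularUpTo μ d a b ρ := fun x r hr hrρ => by
    have := hreg x r hr ((ENNReal.ofReal_le_ofReal hrρ).trans hρle)
    rwa [ENNReal.ofReal_mul (by positivity), ENNReal.ofReal_mul (by positivity),
      ← ENNReal.ofReal_rpow_of_pos hr] at this
  have h2 : (1 : ℝ≥0∞) ≤ 2 ^ d := ENNReal.one_le_rpow (by norm_num) hd
  have hb20 : b * 2 ^ d ≠ 0 := mul_ne_zero hb0 (fun e => by rw [e] at h2; simp at h2)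
  have hb2t : b * 2 ^ d ≠ ∞ := ENNReal.mul_ne_top hb (by simp)
  set k := a / (b * 2 ^ d) with hk_def
  have hk0 : k ≠ 0 := ENNReal.div_ne_zero.2 ⟨ha, hb2t⟩
  have hk1 : k ≤ 1 :=
    ENNReal.div_le_of_le_mul (by simpa using hab.trans (le_mul_of_one_le_right' h2))
  have hk : ∀ (x : X) (r : ℝ), 0 < r → 2 * r ≤ ρ →
      k * ENNReal.ofReal r ^ s ≤ hContent s (ball x r) := fun x r hr hrρ => by
    have := le_hContent_ball hd hab hb hρ h (ht.trans_le hts) hsd x r hr hrρ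
    rw [hk_def, ← ENNReal.mul_div_right_comm]
    exact ENNReal.div_le_of_le_mul' this
  set M : ℝ≥0∞ := 3 ^ t + 20 ^ t * (b * 2 ^ d / a) with hM
  have hM1 : 1 ≤ M := (ENNReal.one_le_rpow (by norm_num) ht).trans le_self_add
  have hM0 : M ≠ 0 := (one_pos.trans_le hM1).ne'
  have hMt : M ≠ ∞ := ENNReal.add_ne_top.2 ⟨by simp,
    ENNReal.mul_ne_top (by simp) (ENNReal.div_ne_top hb2t ha)⟩
  refine ⟨c * k / M, ENNReal.div_pos (mul_ne_zero hc0.ne' hk0) hMt,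
    ENNReal.div_le_of_le_mul (by simpa using (mul_le_one' hc1 hk1).trans hM1), fun U hU => ?_⟩
  refine le_hContent t _ _ fun S hS hcov => ?_
  have := hContent_le_of_cover hd ha hat hb hρ h ht hts hc0.ne' hc1 hk0 hk1 hF hk hU hS hcov
  rw [← ENNReal.mul_div_right_comm]
  exact ENNReal.div_le_of_le_mul' this
end
end

section
/- Let X be an Ahlfors regular space of dimension d whose underlying metric space is complete, let 0 < s ≤ d, and let {F_j}_{j≥1} be a sequence of subsets of X each belonging to the class G^s. Then the countable intersection ⋂_{j≥1} F_j also belongs to the class G^s. -/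
/-!
The argument avoids any loss of constants, so that countably many sets with unrelated constants
can be intersected.

If `H^s_∞(F ∩ U) ≥ c H^s_∞(U)` for all open `U`, then in fact `H^s_∞(F ∩ U) = H^s_∞(U)`: given a
cover of `F ∩ U` of finite cost, apply the inequality to `U` minus the closures of the first `N`
covering sets; the rest has content at most `c⁻¹` times the tail of the series
(`contentOuter_le_inter`). The content is also continuous, with constant one, along increasing
sequences of compact sets (`contentOuter_iUnion_le`). In a locally compact space these two facts
allow, for open sets `G n ⊇ F` and a separable open `U`, the construction of a nested sequence of
open sets with compact closures inside `U ∩ G 0 ∩ ... ∩ G n` whose contents stay above any value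
below `H^s_∞(U)`, whence `H^s_∞(U) ≤ H^s_∞(U ∩ ⋂ G n)` (`contentOuter_le_iInter_inter`).

A complete Ahlfors regular space is locally compact, because balls of radius at most half the
diameter `D` are totally bounded. It need not be separable when `D < ∞`. If `U` is not separable,
then neither is `U ∩ ⋂ F j`, which is dense in `U` by Baire's theorem (each `F j` is dense because
nonempty open sets have positive content, by `s ≤ d`). A countable cover of it must contain a set
of diameter at least `D / 2`, so its content is at least `(D / 2)^s ≥ 2^(-s) H^s_∞(U)`.
-/

open MeasureTheory Metric Set ENNReal Filter

noncomputable section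

/-! ### The Hausdorff content as an outer measure -/

/-- The Hausdorff content `H^s_∞` as an outer measure. Covers are indexed by `ℕ`; the empty set has
diameter zero and `0 ^ s = 0`, so this agrees with covers by countable families. -/
def contentOuter (X : Type*) [MetricSpace X] (s : ℝ) (hs : 0 < s) : OuterMeasure X :=
  OuterMeasure.ofFunction (fun A => ediam A ^ s) (by simp [hs])

section Content

variable {X : Type*} [MetricSpace X] {s : ℝ}

lemma contentOuter_le (hs : 0 < s) (E : Set X) : contentOuter X s hs E ≤ ediam E ^ s :=
  OuterMeasure.ofFunction_le E

lemma contentOuter_le_tsum (hs : 0 < s) {ι : Type*} [Countable ι] {E : Set X} {t : ι → Set X}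
    (h : E ⊆ ⋃ n, t n) : contentOuter X s hs E ≤ ∑' n, ediam (t n) ^ s :=
  (measure_mono h).trans <| (measure_iUnion_le t).trans <|
    ENNReal.tsum_le_tsum fun n => contentOuter_le hs (t n)

lemma exists_cover_of_contentOuter_lt (hs : 0 < s) {E : Set X} {L : ℝ≥0∞}
    (h : contentOuter X s hs E < L) :
    ∃ t : ℕ → Set X, E ⊆ ⋃ n, t n ∧ ∑' n, ediam (t n) ^ s < L := by
  rw [contentOuter, OuterMeasure.ofFunction_apply] at h
  simpa only [iInf_lt_iff, exists_prop] using h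

lemma le_contentOuter (hs : 0 < s) {E : Set X} {L : ℝ≥0∞}
    (h : ∀ t : ℕ → Set X, E ⊆ ⋃ n, t n → L ≤ ∑' n, ediam (t n) ^ s) :
    L ≤ contentOuter X s hs E := by
  rw [contentOuter, OuterMeasure.ofFunction_apply]
  exact le_iInf₂ h

lemma hContent_eq (hs : 0 < s) (E : Set X) : hContent s E = contentOuter X s hs E := by
  apply le_antisymm
  · refine le_contentOuter hs fun t ht => ?_
    refine (iInf₂_le (range t) (countable_range t)).trans ?_
    refine (iInf_le _ (by simpa [sUnion_range] using ht)).trans ?_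
    choose g hg using fun A : range t => A.2
    have hinj : Function.Injective g := fun A B h => by
      apply Subtype.ext
      rw [← hg A, ← hg B, h]
    calc ∑' A : range t, ediam (A : Set X) ^ s = ∑' A : range t, ediam (t (g A)) ^ s := by
          simp only [hg]
      _ ≤ _ := ENNReal.tsum_comp_le_tsum_of_injective hinj fun n => ediam (t n) ^ s
  · refine le_iInf₂ fun S hS => le_iInf fun hE => ?_
    have := hS.to_subtype
    exact contentOuter_le_tsum hs (by rwa [← sUnion_eq_iUnion])

lemma exists_open_superset (hs : 0 < s) (E : Set X) {a ε : ℝ≥0∞}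
    (ha : ediam E ^ s ≤ a) (hε : ε ≠ 0) :
    ∃ O : Set X, IsOpen O ∧ E ⊆ O ∧ ediam O ^ s ≤ a + ε := by
  rcases eq_or_ne a ∞ with rfl | ha'
  · exact ⟨univ, isOpen_univ, subset_univ _, by simp⟩
  have hlim : Tendsto (fun δ : NNReal => (ediam E + 2 * (δ : ℝ≥0∞)) ^ s) (nhds 0)
      (nhds (ediam E ^ s)) := by
    have h1 : Tendsto (fun δ : NNReal => ediam E + 2 * (δ : ℝ≥0∞)) (nhds 0)
        (nhds (ediam E + 2 * ((0 : NNReal) : ℝ≥0∞))) :=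
      tendsto_const_nhds.add (ENNReal.Tendsto.const_mul
        (ENNReal.tendsto_coe.2 tendsto_id) (Or.inr (by simp)))
    simp only [ENNReal.coe_zero, mul_zero, add_zero] at h1
    exact h1.ennrpow_const s
  have hlt : ediam E ^ s < a + ε := ha.trans_lt (ENNReal.lt_add_right ha' hε)
  have hev := hlim.eventually (gt_mem_nhds hlt)
  obtain ⟨δ, hδ, hδ0⟩ := ((hev.filter_mono nhdsWithin_le_nhds).and
    (self_mem_nhdsWithin : Ioi (0 : NNReal) ∈ nhdsWithin 0 (Ioi 0))).exists
  refine ⟨thickening δ E, isOpen_thickening, self_subset_thickening (by exact_mod_cast hδ0) E, ?_⟩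
  exact (ENNReal.rpow_le_rpow (ediam_thickening_le δ) hs.le).trans hδ.le

/-- A countable cover can be enlarged to one by open sets at arbitrarily small cost. -/
lemma exists_open_cover (hs : 0 < s) (t : ℕ → Set X) (a : ℕ → ℝ≥0∞)
    (ha : ∀ n, ediam (t n) ^ s ≤ a n)
    {ε : ℝ≥0∞} (hε : ε ≠ 0) :
    ∃ O : ℕ → Set X, (∀ n, IsOpen (O n)) ∧ (∀ n, t n ⊆ O n) ∧
      ∑' n, ediam (O n) ^ s ≤ ∑' n, a n + ε := by
  obtain ⟨e, he0, he⟩ := ENNReal.exists_pos_sum_of_countable' hε ℕ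
  choose O hO htO hOa using fun n => exists_open_superset hs (t n) (ha n) (he0 n).ne'
  refine ⟨O, hO, htO, (ENNReal.tsum_le_tsum hOa).trans ?_⟩
  rw [ENNReal.tsum_add]
  gcongr

/-- Rearrangement of a cover by decreasing size: the `n`-th set of the new family satisfies
`(n + 1) diam^s ≤ L`. -/
lemma exists_sorted_cover (hs : 0 < s) (t : ℕ → Set X) {L : ℝ≥0∞}
    (h : ∑' n, ediam (t n) ^ s < L) :
    ∃ u : ℕ → Set X, ⋃ n, t n ⊆ ⋃ n, u n ∧ ∑' n, ediam (u n) ^ s ≤ L ∧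
      ∀ n : ℕ, ((n : ℝ≥0∞) + 1) * ediam (u n) ^ s ≤ L := by
  obtain ⟨e, he0, he⟩ := ENNReal.exists_pos_sum_of_countable' (tsub_pos_of_lt h).ne' ℕ
  -- Strictly positive weights make every rank below finite, even for sets of diameter zero.
  set b : ℕ → ℝ≥0∞ := fun n => ediam (t n) ^ s + e n with hb
  have hbL : ∑' n, b n ≤ L := by
    rw [hb, ENNReal.tsum_add]
    calc _ ≤ ∑' n, ediam (t n) ^ s + (L - ∑' n, ediam (t n) ^ s) := by gcongr
      _ = L := add_tsub_cancel_of_le h.le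
  have hbtop : ∑' n, b n ≠ ∞ := by
    rw [hb, ENNReal.tsum_add]
    exact ENNReal.add_ne_top.2 ⟨h.ne_top, (he.trans_le tsub_le_self).ne_top⟩
  have hb0 : ∀ n, b n ≠ 0 := fun n => (lt_of_lt_of_le (he0 n) le_add_self).ne'
  let P : ℕ → Set ℕ := fun i => {j | b i < b j ∨ (b j = b i ∧ j < i)}
  have hPfin : ∀ i, (P i).Finite := fun i =>
    (ENNReal.finite_const_le_of_tsum_ne_top hbtop (hb0 i)).subset fun j hj => by
      rcases hj with hj | hj
      · exact hj.le
      · exact hj.1.ge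
  let ρ : ℕ → ℕ := fun i => (P i).ncard
  have hlt : ∀ i j, i ∈ P j → ρ i < ρ j := by
    intro i j hij
    refine Set.ncard_lt_ncard ⟨?_, ?_⟩ (hPfin j)
    · intro k hk
      simp only [P, mem_ofPred_eq] at *
      rcases hij with hij | ⟨hij, hij'⟩ <;> rcases hk with hk | ⟨hk, hk'⟩
      · exact Or.inl (hij.trans hk)
      · exact Or.inl (hk ▸ hij)
      · exact Or.inl (hij ▸ hk)
      · exact Or.inr ⟨hk.trans hij, hk'.trans hij'⟩
    · intro hsub
      have := hsub hij
      simp [P] at this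
  have hinj : Function.Injective ρ := by
    intro i j hij
    by_contra hne
    rcases lt_trichotomy (b i) (b j) with hlt' | heq | hgt
    · exact (hlt j i (Or.inl hlt')).ne' hij
    · rcases lt_or_gt_of_ne hne with hl | hl
      · exact (hlt i j (Or.inr ⟨heq, hl⟩)).ne hij
      · exact (hlt j i (Or.inr ⟨heq.symm, hl⟩)).ne' hij
    · exact (hlt i j (Or.inl hgt)).ne hij
  have hle : ∀ n, ediam (Function.extend ρ t (fun _ => ∅) n) ^ s ≤ Function.extend ρ b 0 n := by
    intro n
    by_cases hn : ∃ i, ρ i = n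
    · obtain ⟨i, rfl⟩ := hn
      rw [hinj.extend_apply, hinj.extend_apply]
      exact le_self_add
    · rw [Function.extend_apply' _ _ _ hn]
      simp [hs]
  refine ⟨Function.extend ρ t fun _ => ∅, ?_, ?_, ?_⟩
  · refine iUnion_subset fun i => ?_
    refine subset_iUnion_of_subset (ρ i) ?_
    rw [hinj.extend_apply]
  · exact (ENNReal.tsum_le_tsum hle).trans ((tsum_extend_zero hinj b).trans_le hbL)
  · intro n
    refine (mul_le_mul_right (hle n) _).trans ?_
    by_cases hn : ∃ i, ρ i = n
    · obtain ⟨i, rfl⟩ := hn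
      rw [hinj.extend_apply]
      have hi : i ∉ (hPfin i).toFinset := by simp [P]
      have hcard : (insert i (hPfin i).toFinset).card = ρ i + 1 := by
        rw [Finset.card_insert_of_notMem hi, ← Set.ncard_eq_toFinset_card _ (hPfin i)]
      calc ((ρ i : ℝ≥0∞) + 1) * b i = ∑ j ∈ insert i (hPfin i).toFinset, b i := by
            rw [Finset.sum_const, hcard, nsmul_eq_mul]; push_cast; rfl
        _ ≤ ∑ j ∈ insert i (hPfin i).toFinset, b j := by
            refine Finset.sum_le_sum fun j hj => ?_
            rcases Finset.mem_insert.1 hj with rfl | hj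
            · exact le_rfl
            · rcases (hPfin i).mem_toFinset.1 hj with hj | hj
              · exact hj.le
              · exact hj.1.ge
        _ ≤ ∑' j, b j := ENNReal.sum_le_tsum _
        _ ≤ L := hbL
    · rw [Function.extend_apply' _ _ _ hn]
      simp

/-! ### Increasing sequences and the improvement to constant one -/

lemma contentOuter_le_hausdorffMeasure [MeasurableSpace X] [BorelSpace X] (hs : 0 < s)
    (E : Set X) : contentOuter X s hs E ≤ Measure.hausdorffMeasure s E := by
  rw [Measure.hausdorffMeasure_apply]
  refine le_iSup₂_of_le 1 one_pos (le_iInf₂ fun t ht => le_iInf fun _ => ?_)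
  refine (contentOuter_le_tsum hs ht).trans (ENNReal.tsum_le_tsum fun n => ?_)
  rcases (t n).eq_empty_or_nonempty with h | h
  · simp [h, hs]
  · exact le_iSup_of_le h le_rfl

/-- Continuity of the content, with constant one, along increasing sequences of compact sets.

Near-optimal covers of the `K j`, sorted by size, converge along an ultrafilter to a sequence of
sets `E n` with `∑ diam (E n) ^ s ≤ S`, where `S ≤ L` is the total limiting mass. The part of each
`K j` outside an open neighbourhood of `⋃ E n` is compact and is covered by arbitrarily small sets
of total mass at most `L - S`, hence has Hausdorff *measure* at most `L - S`; the measure, unlike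
the content, is continuous along increasing unions for free. -/
lemma contentOuter_iUnion_le [MeasurableSpace X] [BorelSpace X] (hs : 0 < s)
    {K : ℕ → Set X} (hK : ∀ n, IsCompact (K n)) (hmono : Monotone K) {L : ℝ≥0∞}
    (h : ∀ j, contentOuter X s hs (K j) < L) : contentOuter X s hs (⋃ j, K j) ≤ L := by
  rcases eq_or_ne L ∞ with rfl | hL
  · exact le_top
  choose t ht htL using fun j => exists_cover_of_contentOuter_lt hs (h j)
  choose u htu huL hu using fun j => exists_sorted_cover hs (t j) (htL j)
  have hKu : ∀ j, K j ⊆ ⋃ n, u j n := fun j => (ht j).trans (htu j)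
  set 𝒰 : Ultrafilter ℕ := hyperfilter ℕ with h𝒰
  have h𝒰top : (𝒰 : Filter ℕ) ≤ atTop := Nat.hyperfilter_le_atTop
  have hβ : ∀ n, ∃ β : ℝ≥0∞, Tendsto (fun j => ediam (u j n)) 𝒰 (nhds β) := fun n => by
    obtain ⟨β, -, hβ⟩ := isCompact_univ.ultrafilter_le_nhds
      (𝒰.map fun j => ediam (u j n)) (by simp)
    exact ⟨β, hβ⟩
  choose β hβ using hβ
  have hβs : ∀ N, Tendsto (fun j => ∑ n ∈ Finset.range N, ediam (u j n) ^ s) 𝒰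
      (nhds (∑ n ∈ Finset.range N, β n ^ s)) := fun N =>
    tendsto_finsetSum _ fun n _ => (hβ n).ennrpow_const s
  set S := ∑' n, β n ^ s with hS
  have hSL : S ≤ L := by
    refine le_of_tendsto' (ENNReal.tendsto_nat_tsum _) fun N => ?_
    exact le_of_tendsto' (hβs N) fun j => (ENNReal.sum_le_tsum _).trans (huL j)
  have hStop : S ≠ ∞ := ne_top_of_le_ne_top hL hSL
  -- The limit of the `n`-th covering sets along the ultrafilter, in the sense of Kuratowski.
  let E : ℕ → Set X := fun n => {x | ∀ ε > 0, ∀ᶠ j in 𝒰, (u j n ∩ ball x ε).Nonempty}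
  have hEβ : ∀ n, ediam (E n) ≤ β n := by
    intro n
    refine ediam_le fun x hx y hy => ?_
    refine ENNReal.le_of_forall_pos_le_add fun ε hε _ => ?_
    have hε2 : (0 : ℝ) < ε / 2 := by positivity
    refine ge_of_tendsto ((hβ n).add_const (ε : ℝ≥0∞)) ?_
    filter_upwards [hx _ hε2, hy _ hε2] with j hxj hyj
    obtain ⟨x', hx', hxx'⟩ := hxj
    obtain ⟨y', hy', hyy'⟩ := hyj
    have e1 : edist x x' ≤ ENNReal.ofReal (ε / 2) := by
      rw [edist_dist, dist_comm]; exact ENNReal.ofReal_le_ofReal (mem_ball.1 hxx').le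
    have e2 : edist y' y ≤ ENNReal.ofReal (ε / 2) := by
      rw [edist_dist]; exact ENNReal.ofReal_le_ofReal (mem_ball.1 hyy').le
    have e3 : ENNReal.ofReal (ε / 2) + ENNReal.ofReal (ε / 2) = ε := by
      rw [← ENNReal.ofReal_add hε2.le hε2.le, add_halves, ENNReal.ofReal_coe_nnreal]
    calc edist x y ≤ edist x x' + edist x' y' + edist y' y := edist_triangle4 _ _ _ _
      _ ≤ ENNReal.ofReal (ε / 2) + ediam (u j n) + ENNReal.ofReal (ε / 2) := by
          gcongr; exact edist_le_ediam_of_mem hx' hy'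
      _ = ediam (u j n) + ε := by rw [← e3]; ring
  have hdisj : ∀ Q : Set X, IsCompact Q → (∀ n, Disjoint Q (E n)) →
      ∀ n, ∀ᶠ j in 𝒰, Disjoint (u j n) Q := by
    intro Q hQ hQE n
    refine hQ.induction_on (p := fun A => ∀ᶠ j in 𝒰, Disjoint (u j n) A) (by simp) ?_ ?_ ?_
    · intro A B hAB hB
      exact hB.mono fun j hj => hj.mono_right hAB
    · intro A B hA hB
      filter_upwards [hA, hB] with j h1 h2 using disjoint_union_right.2 ⟨h1, h2⟩
    · intro x hx
      have hxE : x ∉ E n := Set.disjoint_left.1 (hQE n) hx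
      simp only [E, mem_ofPred_eq, not_forall] at hxE
      obtain ⟨ε, hε, hxε⟩ := hxE
      refine ⟨ball x ε, mem_nhdsWithin_of_mem_nhds (ball_mem_nhds x hε), ?_⟩
      filter_upwards [Ultrafilter.eventually_not.2 hxε] with j hj
      exact disjoint_iff_inter_eq_empty.2 (not_nonempty_iff_eq_empty.1 hj)
  -- A compact set missing every limit set is eventually covered by the small sets alone,
  -- which carry at most the mass `L - S`.
  have hQ : ∀ (Q : Set X) (j₀ : ℕ), IsCompact Q → Q ⊆ K j₀ → (∀ n, Disjoint Q (E n)) →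
      Measure.hausdorffMeasure s Q ≤ L - S := by
    intro Q j₀ hQ hQK hQE
    rw [Measure.hausdorffMeasure_apply]
    refine iSup₂_le fun δ hδ => ?_
    refine ENNReal.le_sub_of_add_le_right hStop ?_
    obtain ⟨N, hN⟩ : ∃ N : ℕ, L < N * δ ^ s := by
      rcases eq_or_ne δ ∞ with rfl | hδ'
      · exact ⟨1, by simpa [hs] using hL.lt_top⟩
      obtain ⟨N, hN⟩ := ENNReal.exists_nat_mul_gt (b := L)
        (ENNReal.rpow_pos hδ hδ').ne' hL
      exact ⟨N, hN⟩
    have hsmall : ∀ j n, N ≤ n → ediam (u j n) ≤ δ := by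
      intro j n hn
      by_contra! hlt
      have h1 : L < ((n : ℝ≥0∞) + 1) * ediam (u j n) ^ s := by
        refine hN.trans_le (mul_le_mul' ?_ (ENNReal.rpow_le_rpow hlt.le hs.le))
        exact (by exact_mod_cast hn.trans (Nat.le_succ n))
      exact absurd (hu j n) h1.not_ge
    refine le_of_tendsto (tendsto_const_nhds.add (ENNReal.tendsto_nat_tsum _)) ?_
    filter_upwards [eventually_ge_atTop N] with M hM
    refine le_of_tendsto (tendsto_const_nhds.add (hβs M)) ?_
    have hev : ∀ᶠ j in 𝒰, ∀ n ∈ Finset.range M, Disjoint (u j n) Q :=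
      (Finset.range M).eventually_all.2 fun n _ => hdisj Q hQ hQE n
    filter_upwards [hev, h𝒰top (eventually_ge_atTop j₀)] with j hj hjj
    refine le_trans ?_ (huL j)
    rw [← (ENNReal.summable (f := fun n => ediam (u j (n + M)) ^ s)).sum_add_tsum_nat_add'
      (f := fun n => ediam (u j n) ^ s), add_comm]
    refine add_le_add_right ?_ _
    refine (iInf₂_le (fun n => u j (n + M)) ?_).trans
      ((iInf_le _ fun n => hsmall j _ (hM.trans le_add_self)).trans
        (ENNReal.tsum_le_tsum fun n => iSup_le fun _ => le_rfl))
    intro x hx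
    obtain ⟨n, hn⟩ := mem_iUnion.1 (hKu j (hmono hjj (hQK hx)))
    have hnM : M ≤ n := by
      by_contra! hlt
      exact Set.disjoint_left.1 (hj n (Finset.mem_range.2 hlt)) hn hx
    exact mem_iUnion.2 ⟨n - M, by simpa [Nat.sub_add_cancel hnM] using hn⟩
  refine ENNReal.le_of_forall_pos_le_add fun ε hε _ => ?_
  obtain ⟨O, hO, hEO, hOS⟩ := exists_open_cover hs E (fun n => β n ^ s)
    (fun n => ENNReal.rpow_le_rpow (hEβ n) hs.le) (ε := ε) (by exact_mod_cast hε.ne')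
  let Q : ℕ → Set X := fun j => K j \ ⋃ n, O n
  have hQmono : Monotone Q := fun i j hij => sdiff_subset_sdiff_left (hmono hij)
  have hQL : Measure.hausdorffMeasure s (⋃ j, Q j) ≤ L - S := by
    rw [hQmono.measure_iUnion]
    refine iSup_le fun j => hQ (Q j) j ((hK j).diff (isOpen_iUnion hO)) sdiff_subset fun n => ?_
    refine Set.disjoint_left.2 fun x hx hxE => hx.2 (mem_iUnion.2 ⟨n, hEO n hxE⟩)
  have hsub : ⋃ j, K j ⊆ (⋃ n, O n) ∪ ⋃ j, Q j := by
    intro x hx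
    obtain ⟨j, hj⟩ := mem_iUnion.1 hx
    by_cases hxO : x ∈ ⋃ n, O n
    · exact Or.inl hxO
    · exact Or.inr (mem_iUnion.2 ⟨j, hj, hxO⟩)
  calc contentOuter X s hs (⋃ j, K j)
      ≤ contentOuter X s hs (⋃ n, O n) + contentOuter X s hs (⋃ j, Q j) :=
        (measure_mono hsub).trans (measure_union_le _ _)
    _ ≤ (S + ε) + (L - S) := by
        gcongr
        · exact (contentOuter_le_tsum hs Subset.rfl).trans hOS
        · exact (contentOuter_le_hausdorffMeasure hs _).trans hQL
    _ = L + ε := by rw [add_right_comm, add_tsub_cancel_of_le hSL]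

/-- Comparability of the contents of `F ∩ U` and `U` with some constant, for all open `U`,
improves to constant one: finitely many closed covering sets can be cut out of `U`, and the
comparison applied to what remains only sees the tail of the cover. -/
lemma contentOuter_le_inter (hs : 0 < s) {F : Set X} {c : ℝ≥0∞} (hc : 0 < c)
    (hF : ∀ U : Set X, IsOpen U → c * contentOuter X s hs U ≤ contentOuter X s hs (F ∩ U))
    {U : Set X} (hU : IsOpen U) : contentOuter X s hs U ≤ contentOuter X s hs (F ∩ U) := by
  rcases eq_or_ne c ∞ with rfl | hctop
  · refine le_trans ?_ (hF U hU)
    exact le_mul_of_one_le_left' le_top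
  refine le_contentOuter hs fun t ht => ?_
  rcases eq_or_ne (∑' n, ediam (t n) ^ s) ∞ with htop | htop
  · rw [htop]; exact le_top
  have hlim := (ENNReal.Tendsto.const_mul (a := c⁻¹) (ENNReal.tendsto_sum_nat_add _ htop)
    (Or.inr (ENNReal.inv_ne_top.2 hc.ne'))).const_add (∑' n, ediam (t n) ^ s)
  rw [mul_zero, add_zero] at hlim
  refine ge_of_tendsto' hlim fun N => ?_
  set Z := ⋃ n ∈ Finset.range N, closure (t n) with hZ
  have hZcl : IsClosed Z := isClosed_biUnion_finset fun _ _ => isClosed_closure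
  have h1 : contentOuter X s hs (U \ Z) ≤ c⁻¹ * ∑' k, ediam (t (k + N)) ^ s := by
    rw [← ENNReal.mul_le_iff_le_inv hc.ne' hctop]
    refine (hF _ (hU.sdiff hZcl)).trans (contentOuter_le_tsum hs ?_)
    rintro x ⟨hxF, hxU, hxZ⟩
    obtain ⟨n, hn⟩ := mem_iUnion.1 (ht ⟨hxF, hxU⟩)
    have hnN : N ≤ n := by
      by_contra! hlt
      exact hxZ (mem_biUnion (Finset.mem_range.2 hlt) (subset_closure hn))
    exact mem_iUnion.2 ⟨n - N, by simpa [Nat.sub_add_cancel hnN] using hn⟩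
  have h2 : contentOuter X s hs Z ≤ ∑' n, ediam (t n) ^ s := by
    refine (measure_biUnion_finset_le _ _).trans
      ((Finset.sum_le_sum fun n _ => ?_).trans (ENNReal.sum_le_tsum (Finset.range N)))
    exact (contentOuter_le hs _).trans_eq (by rw [ediam_closure])
  calc contentOuter X s hs U ≤ contentOuter X s hs (Z ∪ U \ Z) :=
        measure_mono fun x hx => by by_cases h : x ∈ Z <;> simp [h, hx]
    _ ≤ _ := (measure_union_le _ _).trans (add_le_add h2 h1)

/-! ### Intersections of open sets of full content -/

lemma exists_compact_exhaustion [LocallyCompactSpace X] {V : Set X} (hV : IsOpen V)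
    (hsep : TopologicalSpace.IsSeparable V) :
    ∃ K : ℕ → Set X, (∀ n, IsCompact (K n)) ∧ Monotone K ∧ ⋃ n, K n = V := by
  have := hsep.secondCountableTopology
  have := hV.locallyCompactSpace
  refine ⟨fun n => Subtype.val '' compactCovering V n,
    fun n => (isCompact_compactCovering V n).image continuous_subtype_val,
    fun m n hmn => image_mono (compactCovering_subset V hmn), ?_⟩
  rw [← image_iUnion, iUnion_compactCovering, image_univ, Subtype.range_coe]

/-- If each open set `G n` has full content in every open set, so does `⋂ n, G n` in every
separable open set `U`. Open sets with compact closures are nested inside `U` and successively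
inside each `G n`, losing arbitrarily little content; by compactness an open cover of the
intersection of the closures covers one of them. -/
lemma contentOuter_le_iInter_inter [LocallyCompactSpace X] [MeasurableSpace X] [BorelSpace X]
    (hs : 0 < s) {G : ℕ → Set X} (hGo : ∀ n, IsOpen (G n))
    (hG : ∀ n, ∀ V : Set X, IsOpen V → contentOuter X s hs V ≤ contentOuter X s hs (G n ∩ V))
    {U : Set X} (hU : IsOpen U) (hsep : TopologicalSpace.IsSeparable U) :
    contentOuter X s hs U ≤ contentOuter X s hs ((⋂ n, G n) ∩ U) := by
  refine le_of_forall_lt_imp_le_of_dense fun a ha => ?_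
  let P : Set X → Prop := fun V => IsOpen V ∧ V ⊆ U ∧ a < contentOuter X s hs V
  have step : ∀ (n : ℕ) (V : {V // P V}), ∃ W : {W // P W},
      closure W.1 ⊆ G n ∩ V.1 ∧ IsCompact (closure W.1) := by
    rintro n ⟨V, hVo, hVU, hVa⟩
    have hGV : IsOpen (G n ∩ V) := (hGo n).inter hVo
    obtain ⟨K, hK, hKm, hKV⟩ :=
      exists_compact_exhaustion hGV (hsep.mono (inter_subset_right.trans hVU))
    obtain ⟨b, hab, hb⟩ := exists_between (hVa.trans_le (hG n V hVo))
    obtain ⟨j, hj⟩ : ∃ j, b ≤ contentOuter X s hs (K j) := by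
      by_contra! hlt
      exact (hKV ▸ contentOuter_iUnion_le hs hK hKm hlt).not_gt hb
    obtain ⟨W, hWo, hKW, hWV, hWc⟩ := exists_open_between_and_isCompact_closure (hK j) hGV
      (hKV ▸ subset_iUnion K j)
    exact ⟨⟨W, hWo, (subset_closure.trans hWV).trans (inter_subset_right.trans hVU),
      hab.trans_le (hj.trans (measure_mono hKW))⟩, hWV, hWc⟩
  choose next hnext hnextc using step
  let W : ℕ → {V // P V} := fun n => Nat.rec ⟨U, hU, Subset.rfl, ha⟩ next n
  have hW : ∀ n, closure (W (n + 1)).1 ⊆ G n ∩ (W n).1 := fun n => hnext n (W n)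
  have hWc : ∀ n, IsCompact (closure (W (n + 1)).1) := fun n => hnextc n (W n)
  have hanti : Antitone fun n => closure (W (n + 1)).1 := antitone_nat_of_succ_le fun n =>
    ((hW (n + 1)).trans inter_subset_right).trans subset_closure
  refine le_contentOuter hs fun t ht => ?_
  by_contra! hlt
  obtain ⟨O, hO, htO, hOa⟩ :=
    exists_open_cover hs t _ (fun _ => le_rfl) (tsub_pos_of_lt hlt).ne'
  rw [add_tsub_cancel_of_le hlt.le] at hOa
  obtain ⟨n, hn⟩ := exists_subset_nhds_of_isCompact hanti.directed_ge hWc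
    (U := ⋃ n, O n) fun x hx => by
      refine (isOpen_iUnion hO).mem_nhds (iUnion_mono htO (ht ⟨?_, ?_⟩))
      · exact mem_iInter.2 fun n => (hW n (mem_iInter.1 hx n)).1
      · exact (hW 0 (mem_iInter.1 hx 0)).2
  refine (W (n + 1)).2.2.2.not_ge ?_
  exact (contentOuter_le_tsum hs (subset_closure.trans hn)).trans hOa

end Content

/-! ### Ahlfors regular spaces -/

section Regular

variable {X : Type*} [MetricSpace X] [MeasurableSpace X] [BorelSpace X] {μ : Measure X} {d C : ℝ}

lemma totallyBounded_ball_of_regular (hreg : AhlforsRegular μ d C) {R : ℝ} (hR : 0 < R)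
    (hRD : ENNReal.ofReal (2 * R) ≤ ediam (univ : Set X)) (x : X) :
    TotallyBounded (ball x R) := by
  obtain ⟨hC, hreg⟩ := hreg
  rw [Metric.totallyBounded_iff]
  intro ε hε
  by_contra! hcon
  -- Otherwise there is an infinite `ε`-separated sequence in the ball, whose points carry
  -- disjoint balls of measure bounded below.
  obtain ⟨f, hfR, hfsep⟩ := exists_seq_of_forall_finset_exists (fun y => y ∈ ball x R)
    (fun y z => ε ≤ dist y z) fun S _ => by
      obtain ⟨z, hz, hzS⟩ := not_subset.1 (hcon S S.finite_toSet)
      refine ⟨z, hz, fun y hy => ?_⟩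
      by_contra! hlt
      exact hzS (mem_biUnion (Finset.mem_coe.2 hy) (by rwa [mem_ball, dist_comm]))
  set ρ := min (ε / 2) R with hρ
  have hρ0 : 0 < ρ := lt_min (by positivity) hR
  have hρR : ρ ≤ 2 * R := (min_le_right _ _).trans (by linarith)
  have hdisj : Pairwise (Function.onFun Disjoint fun n => ball (f n) ρ) := by
    have key : ∀ m n, m < n → Disjoint (ball (f m) ρ) (ball (f n) ρ) := fun m n hmn =>
      ball_disjoint_ball (by linarith [hfsep m n hmn, min_le_left (ε / 2) R])
    intro m n hmn
    rcases lt_or_gt_of_ne hmn with h | h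
    · exact key m n h
    · exact (key n m h).symm
  have hsub : ⋃ n, ball (f n) ρ ⊆ ball x (2 * R) := iUnion_subset fun n =>
    ball_subset_ball' (by linarith [mem_ball.1 (hfR n), min_le_right (ε / 2) R])
  have htop : μ (⋃ n, ball (f n) ρ) = ∞ := by
    rw [measure_iUnion hdisj fun n => measurableSet_ball, eq_top_iff]
    have hpos : ENNReal.ofReal (C⁻¹ * ρ ^ d) ≠ 0 := by
      have : 0 < C⁻¹ * ρ ^ d := by positivity
      simpa using this
    rw [← ENNReal.tsum_const_eq_top_of_ne_zero (α := ℕ) hpos]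
    exact ENNReal.tsum_le_tsum fun n =>
      (hreg (f n) ρ hρ0 ((ENNReal.ofReal_le_ofReal hρR).trans hRD)).1
  have := (measure_mono hsub).trans (hreg x (2 * R) (by positivity) hRD).2
  rw [htop] at this
  exact absurd this (by simp)

lemma measure_le_of_regular_s8 (hreg : AhlforsRegular μ d C) {E : Set X}
    (hE : ediam E < ediam (univ : Set X)) : μ E ≤ ENNReal.ofReal C * ediam E ^ d := by
  obtain ⟨hC, hreg⟩ := hreg
  rcases E.eq_empty_or_nonempty with rfl | ⟨x, hx⟩
  · simp
  have := nhdsGT_neBot_of_exists_gt ⟨_, hE⟩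
  have hlim : Tendsto (fun p : ℝ≥0∞ => ENNReal.ofReal C * p ^ d) 
      (nhdsWithin (ediam E) (Ioi (ediam E))) (nhds (ENNReal.ofReal C * ediam E ^ d)) :=
    ENNReal.Tendsto.const_mul (((tendsto_id).ennrpow_const d).mono_left nhdsWithin_le_nhds)
      (Or.inr ENNReal.ofReal_ne_top)
  refine ge_of_tendsto hlim ?_
  filter_upwards [self_mem_nhdsWithin, Ioo_mem_nhdsGT hE] with p hp hpD
  have hptop : p ≠ ∞ := hpD.2.ne_top
  have hp0 : 0 < p.toReal := ENNReal.toReal_pos (bot_lt_of_lt hpD.1).ne' hptop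
  have hsub : E ⊆ ball x p.toReal := fun y hy => by
    rw [mem_ball, ← ENNReal.ofReal_lt_ofReal_iff hp0, ENNReal.ofReal_toReal hptop, ← edist_dist]
    exact (edist_le_ediam_of_mem hy hx).trans_lt hpD.1
  refine (measure_mono hsub).trans ((hreg x p.toReal hp0 ?_).2.trans_eq ?_)
  · rw [ENNReal.ofReal_toReal hptop]; exact hpD.2.le
  · rw [ENNReal.ofReal_mul (by linarith), ← ENNReal.ofReal_rpow_of_pos hp0,
      ENNReal.ofReal_toReal hptop]

/-- Since `s ≤ d`, sets of zero content are null for the regular measure, which charges every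
ball. -/
lemma contentOuter_ne_zero_of_regular (hreg : AhlforsRegular μ d C) {s : ℝ} (hs : 0 < s)
    (hsd : s ≤ d) (hD : 0 < ediam (univ : Set X)) {V : Set X} (hV : IsOpen V)
    (hne : V.Nonempty) : contentOuter X s hs V ≠ 0 := by
  intro h0
  have hμ : μ V ≤ 0 := by
    have hlim : Tendsto (fun p : ℝ≥0∞ => ENNReal.ofReal C * p) (nhdsWithin 0 (Ioi 0))
        (nhds (ENNReal.ofReal C * 0)) :=
      ENNReal.Tendsto.const_mul (tendsto_id.mono_left nhdsWithin_le_nhds)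
        (Or.inr ENNReal.ofReal_ne_top)
    rw [mul_zero] at hlim
    have hρ0 : 0 < min 1 (ediam (univ : Set X)) ^ s :=
      ENNReal.rpow_pos (lt_min one_pos hD) (ne_top_of_le_ne_top one_ne_top (min_le_left _ _))
    refine ge_of_tendsto hlim ?_
    filter_upwards [Ioo_mem_nhdsGT hρ0] with ε hε
    obtain ⟨t, ht, htε⟩ := exists_cover_of_contentOuter_lt hs (h0.trans_lt hε.1)
    have hdiam : ∀ n, ediam (t n) < min 1 (ediam (univ : Set X)) := fun n =>
      (ENNReal.rpow_lt_rpow_iff hs).1 (((ENNReal.le_tsum n).trans_lt htε).trans hε.2)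
    calc μ V ≤ ∑' n, μ (t n) := (measure_mono ht).trans (measure_iUnion_le t)
      _ ≤ ∑' n, ENNReal.ofReal C * ediam (t n) ^ s := ENNReal.tsum_le_tsum fun n =>
          (measure_le_of_regular_s8 hreg ((hdiam n).trans_le (min_le_right _ _))).trans
            (mul_le_mul_right (ENNReal.rpow_le_rpow_of_exponent_ge
              ((hdiam n).le.trans (min_le_left _ _)) hsd) _)
      _ = ENNReal.ofReal C * ∑' n, ediam (t n) ^ s := ENNReal.tsum_mul_left
      _ ≤ ENNReal.ofReal C * ε := by gcongr
  obtain ⟨x, hx⟩ := hne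
  obtain ⟨r, hr, hrV⟩ := Metric.isOpen_iff.1 hV x hx
  obtain ⟨q, hq, hqr⟩ := ENNReal.lt_iff_exists_nnreal_btwn.1 hD
  have hq0 : (0 : ℝ) < q := by exact_mod_cast hq
  have hmin : 0 < min r q := lt_min hr hq0
  have hball := (hreg.2 x (min r q) hmin ((ENNReal.ofReal_le_ofReal (min_le_right _ _)).trans
    (by rw [ENNReal.ofReal_coe_nnreal]; exact hqr.le))).1
  have hle := (hball.trans (measure_mono ((ball_subset_ball (min_le_left _ _)).trans hrV))).trans hμ
  have hC := hreg.1
  have hpos : 0 < C⁻¹ * min r q ^ d := by positivity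
  exact absurd hle (by simpa using hpos)

lemma locallyCompactSpace_of_regular [CompleteSpace X] (hreg : AhlforsRegular μ d C)
    (hD : 0 < ediam (univ : Set X)) : LocallyCompactSpace X := by
  obtain ⟨q, hq, hqr⟩ := ENNReal.lt_iff_exists_nnreal_btwn.1 hD
  have hq0 : (0 : ℝ) < q := by exact_mod_cast hq
  have : WeaklyLocallyCompactSpace X := ⟨fun x => by
    -- The measure bounds hold for radii up to the diameter `≥ q`, and covering a ball of
    -- radius `R` uses radii up to `2 R`.
    refine ⟨closedBall x (q / 4), ?_, closedBall_mem_nhds x (by positivity)⟩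
    refine TotallyBounded.isCompact_of_isClosed ?_ isClosed_closedBall
    refine (totallyBounded_ball_of_regular hreg (R := q / 2) (by positivity) ?_ x).subset
      (closedBall_subset_ball (by linarith))
    rw [mul_div_cancel₀ _ two_ne_zero, ENNReal.ofReal_coe_nnreal]
    exact hqr.le⟩
  infer_instance

/-- If `U` is not separable, any countable cover of a dense subset of `U` contains a set of
diameter at least half that of the whole space, small balls being separable. -/
lemma le_contentOuter_of_not_isSeparable (hreg : AhlforsRegular μ d C) {s : ℝ} (hs : 0 < s)
    (hD : 0 < ediam (univ : Set X)) {U A : Set X} (hU : ¬ TopologicalSpace.IsSeparable U)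
    (hUA : U ⊆ closure A) :
    2⁻¹ ^ s * contentOuter X s hs U ≤ contentOuter X s hs A := by
  set D := ediam (univ : Set X) with hDdef
  have hDtop : D ≠ ∞ := by
    intro htop
    suffices huniv : TopologicalSpace.IsSeparable (univ : Set X) from
      hU (huniv.mono (subset_univ U))
    obtain ⟨x, -⟩ : U.Nonempty := nonempty_iff_ne_empty.2 fun h =>
      hU (h ▸ countable_empty.isSeparable)
    rw [← iUnion_ball_nat_succ x]
    refine TopologicalSpace.isSeparable_iUnion.2 fun n => ?_
    exact (totallyBounded_ball_of_regular hreg (by positivity)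
      (by rw [← hDdef, htop]; exact le_top) x).isSeparable
  have hle : contentOuter X s hs U ≤ D ^ s :=
    (contentOuter_le hs U).trans (ENNReal.rpow_le_rpow (ediam_mono (subset_univ U)) hs.le)
  refine le_contentOuter hs fun t ht => ?_
  obtain ⟨n, hn⟩ : ∃ n, 2⁻¹ * D ≤ ediam (t n) := by
    by_contra! hlt
    refine hU (TopologicalSpace.IsSeparable.mono ?_ (hUA.trans (closure_mono ht)))
    refine (TopologicalSpace.isSeparable_iUnion.2 fun n => ?_).closure
    rcases (t n).eq_empty_or_nonempty with h | ⟨x, hx⟩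
    · exact h ▸ countable_empty.isSeparable
    have hD0 : 0 < D.toReal := ENNReal.toReal_pos hD.ne' hDtop
    refine (totallyBounded_ball_of_regular hreg (R := D.toReal / 2) (by positivity) ?_
      x).isSeparable.mono fun y hy => ?_
    · rw [mul_div_cancel₀ _ two_ne_zero, ENNReal.ofReal_toReal hDtop]
    · rw [mem_ball, ← ENNReal.ofReal_lt_ofReal_iff (by positivity), ← edist_dist,
        ENNReal.ofReal_div_of_pos two_pos, ENNReal.ofReal_toReal hDtop]
      refine (edist_le_ediam_of_mem hy hx).trans_lt ((hlt n).trans_eq ?_)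
      rw [ENNReal.div_eq_inv_mul, ENNReal.ofReal_ofNat]
  calc 2⁻¹ ^ s * contentOuter X s hs U ≤ 2⁻¹ ^ s * D ^ s := by gcongr
    _ = (2⁻¹ * D) ^ s := (ENNReal.mul_rpow_of_nonneg _ _ hs.le).symm
    _ ≤ ediam (t n) ^ s := ENNReal.rpow_le_rpow hn hs.le
    _ ≤ _ := ENNReal.le_tsum n

end Regular

/-- In a complete Ahlfors regular space, the class `G^s` is closed under countable
intersections. -/
theorem memGs_iInter {X : Type*} [MetricSpace X] [MeasurableSpace X] [BorelSpace X]
    [CompleteSpace X] (μ : Measure X) (d C : ℝ) (hd : 0 < d)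
    (hreg : AhlforsRegular μ d C) (s : ℝ) (hs : 0 < s) (hsd : s ≤ d)
    (F : ℕ → Set X) (hF : ∀ j, MemGs s (F j)) : MemGs s (⋂ j, F j) := by
  have hc1 : (2⁻¹ : ℝ≥0∞) ^ s ≤ 1 := ENNReal.rpow_le_one (by simp) hs.le
  refine ⟨IsGδ.iInter fun j => (hF j).1, 2⁻¹ ^ s, ENNReal.rpow_pos (by simp) (by simp),
    hc1, fun U hU => ?_⟩
  rw [hContent_eq hs, hContent_eq hs]
  rcases eq_or_ne (ediam (univ : Set X)) 0 with hD | hD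
  · have h0 : contentOuter X s hs U ≤ 0 := by
      refine (contentOuter_le hs U).trans ?_
      have hU0 : ediam U = 0 := le_antisymm (hD ▸ ediam_mono (subset_univ U)) zero_le
      rw [hU0, ENNReal.zero_rpow_of_pos hs]
    rw [le_antisymm h0 zero_le, mul_zero]
    exact zero_le
  replace hD : 0 < ediam (univ : Set X) := pos_iff_ne_zero.2 hD
  have := locallyCompactSpace_of_regular hreg hD
  choose G hGo hFG using fun j => isGδ_iff_eq_iInter_nat.1 (hF j).1
  let G' : ℕ → Set X := fun n => G n.unpair.1 n.unpair.2
  have hFG' : ⋂ j, F j = ⋂ n, G' n := by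
    simp only [hFG]
    exact (Set.iInter_unpair G).symm
  have hG'o : ∀ n, IsOpen (G' n) := fun n => hGo _ _
  have hG' : ∀ n, ∀ V : Set X, IsOpen V →
      contentOuter X s hs V ≤ contentOuter X s hs (G' n ∩ V) := by
    intro n V hV
    obtain ⟨-, c, hc0, -, hc⟩ := hF n.unpair.1
    simp only [hContent_eq hs] at hc
    refine (contentOuter_le_inter hs hc0 hc hV).trans (measure_mono (inter_subset_inter_left V ?_))
    rw [hFG]
    exact iInter_subset _ _
  rw [hFG']
  by_cases hsep : TopologicalSpace.IsSeparable U
  · exact (mul_le_of_le_one_left' hc1).trans (contentOuter_le_iInter_inter hs hG'o hG' hU hsep)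
  -- A bounded regular space can have uncountably many pieces at mutual distance equal to its
  -- diameter, so nonseparable open sets do occur.
  · have hdense : Dense (⋂ n, G' n) := by
      refine dense_iInter_of_isOpen_nat hG'o fun n => dense_iff_inter_open.2 fun V hV hne => ?_
      by_contra hemp
      have h0 := hG' n V hV
      rw [inter_comm, not_nonempty_iff_eq_empty.1 hemp, measure_empty] at h0
      exact contentOuter_ne_zero_of_regular hreg hs hsd hD hV hne (le_antisymm h0 zero_le)
    refine le_contentOuter_of_not_isSeparable hreg hs hD hsep ?_
    rw [inter_comm]
    exact hdense.open_subset_closure_inter hU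
end
end

section
/- Let X and Y be Ahlfors regular spaces, let s > 0, and let f : X → Y be a bi-Lipschitz homeomorphism (a bijection f with L⁻¹·ϱ_X(x,x') ≤ ϱ_Y(f(x),f(x')) ≤ L·ϱ_X(x,x') for some L ≥ 1 and all x, x' ∈ X). Then a subset F ⊆ X belongs to the class G^s(X) if and only if f(F) belongs to the class G^s(Y). -/
/-!
A `K`-Lipschitz map sends a countable cover of `E` to a countable cover of its image and multiplies
each diameter by at most `K`, so it multiplies `H^s_∞` by at most `K^s` (`hContent_image_le`). If
`e` is a bijection with `e` and `e⁻¹` both `K`-Lipschitz and `K ≥ 1`, this gives, for `U` open in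
the target and `V = e⁻¹(U)`,
`c · H(U) ≤ c K^s · H(V) ≤ K^s · H(F ∩ V) ≤ K^{2s} · H(e(F) ∩ U)`,
so the constant `c` for `F` yields the constant `c K^{-2s}` for `e(F)` (`MemGs.image_equiv`). The
hypotheses being symmetric in `e` and `e⁻¹`, the converse is the same statement for `e⁻¹`.
-/

open MeasureTheory Metric Set ENNReal Filter

noncomputable section

open scoped NNReal

theorem hContent_image_le {X Y : Type*} [MetricSpace X] [MetricSpace Y] {s : ℝ} (hs : 0 < s)
    {K : ℝ≥0} (hK : K ≠ 0) {f : X → Y} (hf : LipschitzWith K f) (E : Set X) :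
    hContent s (f '' E) ≤ (K : ℝ≥0∞) ^ s * hContent s E := by
  have hK0 : (K : ℝ≥0∞) ^ s ≠ 0 := by simp [ENNReal.rpow_eq_zero_iff, hK]
  have hKt : (K : ℝ≥0∞) ^ s ≠ ∞ := ENNReal.rpow_ne_top_of_nonneg hs.le ENNReal.coe_ne_top
  rw [mul_comm, ← ENNReal.div_le_iff_le_mul (Or.inl hK0) (Or.inl hKt)]
  refine le_iInf fun S => le_iInf fun hS => le_iInf fun hE => ?_
  rw [ENNReal.div_le_iff_le_mul (Or.inl hK0) (Or.inl hKt), mul_comm]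
  have hcover : f '' E ⊆ ⋃₀ (image f '' S) := by
    rintro _ ⟨x, hx, rfl⟩
    obtain ⟨A, hA, hxA⟩ := hE hx
    exact ⟨f '' A, mem_image_of_mem _ hA, mem_image_of_mem _ hxA⟩
  calc hContent s (f '' E)
      ≤ ∑' B : (image f '' S : Set (Set Y)), Metric.ediam (B : Set Y) ^ s :=
        iInf_le_of_le _ (iInf_le_of_le (hS.image _) (iInf_le _ hcover))
    _ ≤ ∑' A : S, Metric.ediam (f '' (A : Set X)) ^ s :=
        -- only an inequality, since distinct covering sets may have the same image
        ENNReal.tsum_le_tsum_comp_of_surjective (surjective_mapsTo_image_restrict (image f) S)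
          fun B => Metric.ediam (B : Set Y) ^ s
    _ ≤ ∑' A : S, (K : ℝ≥0∞) ^ s * Metric.ediam (A : Set X) ^ s := by
        refine ENNReal.tsum_le_tsum fun A => ?_
        rw [← ENNReal.mul_rpow_of_nonneg _ _ hs.le]
        exact ENNReal.rpow_le_rpow (hf.ediam_image_le _) hs.le
    _ = (K : ℝ≥0∞) ^ s * ∑' A : S, Metric.ediam (A : Set X) ^ s := ENNReal.tsum_mul_left

theorem MemGs.image_equiv {X Y : Type*} [MetricSpace X] [MetricSpace Y] {s : ℝ} (hs : 0 < s)
    {K : ℝ≥0} (hK : 1 ≤ K) (e : X ≃ Y) (he : LipschitzWith K e) (he' : LipschitzWith K e.symm)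
    {F : Set X} (hF : MemGs s F) : MemGs s (e '' F) := by
  obtain ⟨hG, c, hc0, hc1, hc⟩ := hF
  have hK0 : K ≠ 0 := (zero_lt_one.trans_le hK).ne'
  set k : ℝ≥0∞ := (K : ℝ≥0∞) ^ s
  have hk1 : 1 ≤ k := ENNReal.one_le_rpow (by exact_mod_cast hK) hs
  have hkt : k ≠ ∞ := ENNReal.rpow_ne_top_of_nonneg hs.le ENNReal.coe_ne_top
  have hkkt : k * k ≠ ∞ := ENNReal.mul_ne_top hkt hkt
  refine ⟨?_, c / (k * k), ENNReal.div_pos hc0.ne' hkkt, ?_, fun U hU => ?_⟩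
  · rw [e.image_eq_preimage_symm]
    exact hG.preimage he'.continuous
  · exact ENNReal.div_le_of_le_mul (hc1.trans (by simpa using one_le_mul hk1 hk1))
  · have h1 : hContent s U ≤ k * hContent s (e ⁻¹' U) := by
      simpa [e.image_preimage] using hContent_image_le hs hK0 he (e ⁻¹' U)
    have h2 : hContent s (F ∩ e ⁻¹' U) ≤ k * hContent s (e '' F ∩ U) := by
      have := hContent_image_le hs hK0 he' (e '' F ∩ U)
      rwa [image_inter e.symm.injective, e.symm_image_image, e.symm.image_eq_preimage_symm U,
        e.symm_symm] at this
    rw [div_eq_mul_inv, mul_right_comm, ← div_eq_mul_inv]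
    refine ENNReal.div_le_of_le_mul ?_
    calc c * hContent s U ≤ c * (k * hContent s (e ⁻¹' U)) := by gcongr
      _ = k * (c * hContent s (e ⁻¹' U)) := by ring
      _ ≤ k * (k * hContent s (e '' F ∩ U)) := by
        exact mul_le_mul_right ((hc _ (hU.preimage he.continuous)).trans h2) k
      _ = hContent s (e '' F ∩ U) * (k * k) := by ring

/-- If `f : X → Y` is a bi-Lipschitz homeomorphism between Ahlfors regular spaces, then
`F ∈ G^s(X)` if and only if `f(F) ∈ G^s(Y)`. -/
theorem memGs_image_biLipschitz {X Y : Type*} [MetricSpace X] [MeasurableSpace X]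
    [BorelSpace X] [MetricSpace Y] [MeasurableSpace Y] [BorelSpace Y]
    (μX : Measure X) (dX CX : ℝ) (hdX : 0 < dX) (hregX : AhlforsRegular μX dX CX)
    (μY : Measure Y) (dY CY : ℝ) (hdY : 0 < dY) (hregY : AhlforsRegular μY dY CY)
    (s : ℝ) (hs : 0 < s) (f : X → Y) (hf : Function.Bijective f)
    (L : ℝ) (hL : 1 ≤ L)
    (hlow : ∀ x x' : X, L⁻¹ * dist x x' ≤ dist (f x) (f x'))
    (hup : ∀ x x' : X, dist (f x) (f x') ≤ L * dist x x')
    (F : Set X) : MemGs s F ↔ MemGs s (f '' F) := by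
  have hL0 : 0 < L := zero_lt_one.trans_le hL
  lift L to ℝ≥0 using hL0.le
  let e : X ≃ Y := Equiv.ofBijective f hf
  have he : LipschitzWith L e := LipschitzWith.of_dist_le_mul hup
  have he' : LipschitzWith L e.symm := by
    refine LipschitzWith.of_dist_le_mul fun y y' => ?_
    have h : (L : ℝ)⁻¹ * dist (e.symm y) (e.symm y') ≤ dist (e (e.symm y)) (e (e.symm y')) :=
      hlow _ _
    rwa [e.apply_symm_apply, e.apply_symm_apply, inv_mul_le_iff₀ hL0] at h
  have hL1 : 1 ≤ L := by exact_mod_cast hL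
  refine ⟨fun h => h.image_equiv hs hL1 e he he', fun h => ?_⟩
  have h' := MemGs.image_equiv hs hL1 e.symm he' he h
  rwa [show f '' F = e '' F from rfl, e.symm_image_image] at h'
end
end

section
/- Let (X, ρ) be an Ahlfors regular quasi-metric space of dimension d, and suppose ϱ is a metric on X, η ∈ (0,1) and L ≥ 1 satisfy L⁻¹·ρ(x,y)^η ≤ ϱ(x,y) ≤ L·ρ(x,y)^η for all x, y ∈ X. Let α > 1 and let F be the set of (ℰ, α)-approximable points in (X, ρ) constructed from a family {A_j} of (c₁, C₁, ε_j)-nets with respect to ρ, where ℰ = {ε_j} and ε_j → 0. Set λ₁ = L^{−1/α} and λ₂ = L^{1/α}. Then there exist constants c̃₁, C̃₁ > 0 such that for i = 1, 2 each A_j is a (c̃₁/λ_i, C̃₁/λ_i, λ_i·ε_j^η)-net in (X, ϱ), and the sets F_i of (ℰ_i, α)-approximable points in (X, ϱ) constructed from the same family {A_j} with ℰ_i = {λ_i·ε_j^η} satisfy F₁ ⊆ F ⊆ F₂. -/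
/-!
The equivalence `L⁻¹ ρ ^ η ≤ dist ≤ L ρ ^ η` turns a lower bound `s < ρ x y` into
`L⁻¹ s ^ η < dist x y` and an upper bound `ρ x y < s` into `dist x y < L s ^ η`, because
`t ↦ t ^ η` is strictly increasing on `[0, ∞)`.

For the nets, `λ` cancels in `(c / λ) * (λ * ε ^ η)`, so the constants `ct = L⁻¹ (2 c₁) ^ η / 2`
and `Ct = L C₁ ^ η` work for every `λ > 0`. For the approximable points, the choice
`λ₁ ^ α = L⁻¹`, `λ₂ ^ α = L` makes the radius `(λᵢ ε ^ η) ^ α` equal to `L⁻¹ (ε ^ α) ^ η` and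
`L (ε ^ α) ^ η` respectively, so at each net point the `ρ`-ball of radius `ε ^ α` lies between
the two metric balls, and the inclusions pass to the limsup sets.
-/

open MeasureTheory Metric Set ENNReal Filter

noncomputable section

/-- A quasi-metric on `X`: symmetric, vanishing exactly on the diagonal, and satisfying the
quasi-triangle inequality `ρ(x,z) ≤ A (ρ(x,y) + ρ(y,z))` for some constant `A ≥ 1`. -/
structure QuasiMetric (X : Type*) where
  ρ : X → X → ℝ
  nonneg : ∀ x y, 0 ≤ ρ x y
  symm : ∀ x y, ρ x y = ρ y x
  eq_zero_iff : ∀ x y, ρ x y = 0 ↔ x = y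
  A : ℝ
  one_le_A : 1 ≤ A
  triangle : ∀ x y z, ρ x z ≤ A * (ρ x y + ρ y z)

/-- The open ball of a quasi-metric. -/
def QuasiMetric.ball {X : Type*} (q : QuasiMetric X) (x : X) (r : ℝ) : Set X :=
  {y | q.ρ x y < r}

/-- Ahlfors regularity of dimension `d` with constant `C` for a quasi-metric space. -/
def QuasiMetric.AhlforsRegular {X : Type*} [MeasurableSpace X] (q : QuasiMetric X)
    (μ : Measure X) (d C : ℝ) : Prop :=
  1 ≤ C ∧ ∀ (x : X) (r : ℝ), 0 < r →
    (ENNReal.ofReal r ≤ ⨆ (a : X) (b : X), ENNReal.ofReal (q.ρ a b)) →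
    ENNReal.ofReal (C⁻¹ * r ^ d) ≤ μ (q.ball x r) ∧ μ (q.ball x r) ≤ ENNReal.ofReal (C * r ^ d)

/-- A `(c₁, C₁, ε)`-net for a quasi-metric. -/
def QuasiMetric.IsNet {X : Type*} (q : QuasiMetric X) (c₁ C₁ ε : ℝ) (A : Set X) : Prop :=
  (∀ x ∈ A, ∀ y ∈ A, x ≠ y → 2 * c₁ * ε < q.ρ x y) ∧ ∀ x : X, ∃ y ∈ A, q.ρ x y < C₁ * ε

/-- The set of `(ℰ, α)`-approximable points for a quasi-metric. -/
def QuasiMetric.approxPoints {X : Type*} (q : QuasiMetric X) (A : ℕ → Set X) (ε : ℕ → ℝ)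
    (α : ℝ) : Set X :=
  ⋂ j : ℕ, ⋃ j' : ℕ, ⋃ (_ : j ≤ j'), ⋃ x ∈ A j', q.ball x (ε j' ^ α)

/-- A `(c₁, C₁, ε)`-net for a metric space. -/
def IsNet {X : Type*} [MetricSpace X] (c₁ C₁ ε : ℝ) (A : Set X) : Prop :=
  (∀ x ∈ A, ∀ y ∈ A, x ≠ y → 2 * c₁ * ε < dist x y) ∧
    ∀ x : X, ∃ y ∈ A, dist x y < C₁ * ε

/-- The set of `(ℰ, α)`-approximable points for a metric space. -/
def approxPoints {X : Type*} [MetricSpace X] (A : ℕ → Set X) (ε : ℕ → ℝ) (α : ℝ) : Set X :=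
  ⋂ j : ℕ, ⋃ j' : ℕ, ⋃ (_ : j ≤ j'), ⋃ x ∈ A j', Metric.ball x (ε j' ^ α)

/-- The radius `(λ ε ^ η) ^ α` with `λ = L ^ (t / α)`, rewritten in terms of `(ε ^ α) ^ η`; used
with `t = ±1`. -/
lemma radius_eq {L e η α t : ℝ} (hL : 0 < L) (he : 0 < e) (hα : α ≠ 0) :
    (L ^ (t / α) * e ^ η) ^ α = L ^ t * (e ^ α) ^ η := by
  rw [Real.mul_rpow (by positivity) (by positivity), ← Real.rpow_mul hL.le,
    ← Real.rpow_mul he.le, ← Real.rpow_mul he.le, div_mul_cancel₀ t hα, mul_comm η α]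

/-- If `ϱ` is a metric bi-Lipschitz equivalent to `ρ^η`, and `F` is a set of
`(ℰ, α)`-approximable points of the Ahlfors regular quasi-metric space `(X, ρ)` built from
the nets `A_j`, then (with `λ₁ = L^(-1/α)`, `λ₂ = L^(1/α)`) there are constants
`c̃₁, C̃₁ > 0` such that each `A_j` is a `(c̃₁/λᵢ, C̃₁/λᵢ, λᵢ ε_j^η)`-net in `(X, ϱ)`, and the
corresponding sets `F₁, F₂` of approximable points in `(X, ϱ)` satisfy `F₁ ⊆ F ⊆ F₂`. -/
theorem quasiMetric_approxPoints_sandwich {X : Type*} [MetricSpace X] [MeasurableSpace X]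
    [BorelSpace X] (q : QuasiMetric X) (μ : Measure X) (d C : ℝ) (hd : 0 < d)
    (hreg : q.AhlforsRegular μ d C)
    (η L : ℝ) (hη0 : 0 < η) (hη1 : η < 1) (hL : 1 ≤ L)
    (hlow : ∀ x y : X, L⁻¹ * q.ρ x y ^ η ≤ dist x y)
    (hup : ∀ x y : X, dist x y ≤ L * q.ρ x y ^ η)
    (α : ℝ) (hα : 1 < α) (c₁ C₁ : ℝ) (hc₁ : 0 < c₁) (hC₁ : 0 < C₁)
    (ε : ℕ → ℝ) (hεpos : ∀ j, 0 < ε j) (hεlim : Tendsto ε atTop (nhds 0))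
    (𝒜 : ℕ → Set X) (h𝒜 : ∀ j, q.IsNet c₁ C₁ (ε j) (𝒜 j)) :
    ∃ ct Ct : ℝ, 0 < ct ∧ 0 < Ct ∧
      (∀ lam ∈ ({L ^ (-(1 / α)), L ^ (1 / α)} : Set ℝ), ∀ j : ℕ,
        IsNet (ct / lam) (Ct / lam) (lam * ε j ^ η) (𝒜 j)) ∧
      approxPoints 𝒜 (fun j => L ^ (-(1 / α)) * ε j ^ η) α ⊆ q.approxPoints 𝒜 ε α ∧
      q.approxPoints 𝒜 ε α ⊆ approxPoints 𝒜 (fun j => L ^ (1 / α) * ε j ^ η) α := by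
  have hL0 : 0 < L := by linarith
  have hα0 : α ≠ 0 := by linarith
  refine ⟨L⁻¹ * (2 * c₁) ^ η / 2, L * C₁ ^ η, by positivity, by positivity, ?_, ?_, ?_⟩
  · intro lam hlam j
    have hlam0 : 0 < lam := by
      rcases hlam with rfl | rfl <;> positivity
    have hε := hεpos j
    have cancel (c : ℝ) : c / lam * (lam * ε j ^ η) = c * ε j ^ η := by
      field_simp
    obtain ⟨hsep, hcov⟩ := h𝒜 j
    refine ⟨fun x hx y hy hxy => ?_, fun x => ?_⟩
    · refine lt_of_lt_of_le ?_ (hlow x y)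
      rw [mul_assoc 2, cancel]
      have h := Real.rpow_lt_rpow (by positivity) (hsep x hx y hy hxy) hη0
      rw [Real.mul_rpow (by positivity) hε.le] at h
      calc _ = L⁻¹ * ((2 * c₁) ^ η * ε j ^ η) := by ring
        _ < _ := by gcongr
    · obtain ⟨y, hy, hxy⟩ := hcov x
      refine ⟨y, hy, (hup x y).trans_lt ?_⟩
      rw [cancel, mul_assoc, ← Real.mul_rpow hC₁.le hε.le]
      have h := Real.rpow_lt_rpow (q.nonneg x y) hxy hη0
      gcongr
  · refine iInter_mono fun j => iUnion_mono fun k => iUnion_mono fun _ =>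
      iUnion₂_mono fun x _ y hy => ?_
    rw [mem_ball', ← neg_div, radius_eq hL0 (hεpos k) hα0, Real.rpow_neg_one] at hy
    have h := lt_of_mul_lt_mul_left ((hlow x y).trans_lt hy) (by positivity)
    exact (Real.rpow_lt_rpow_iff (q.nonneg x y) (Real.rpow_nonneg (hεpos k).le α) hη0).1 h
  · refine iInter_mono fun j => iUnion_mono fun k => iUnion_mono fun _ =>
      iUnion₂_mono fun x _ y hy => ?_
    rw [mem_ball', radius_eq hL0 (hεpos k) hα0, Real.rpow_one]
    have h := Real.rpow_lt_rpow (q.nonneg x y) hy hη0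
    refine (hup x y).trans_lt ?_
    gcongr
end
end
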